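/- arXiv:2403.02964 — 2 statements merged into one kernel-verified Lean document; each statement's English description precedes it below -/
import Mathlib

section
/- Given ρ₀ > 0 and continuous functions φ₊, φ₋ : (0, ρ₀] → ℝ that extend continuously to [0, ρ₀] and satisfy 0 < Θ(r) := φ₋(r) − φ₊(r) ≤ 2π for all r ∈ (0, ρ₀], let Ω = {r e^{iθ} : 0 < r < ρ₀, φ₊(r) < θ < φ₋(r)} ⊂ ℂ be the associated polar domain. Let 0 < α ≤ 2, γ ∈ (0,1], C₁ > 0, and assume in addition that Θ(r) ≤ πα(1 + C₁ r^γ) for all r ∈ (0, ρ₀]. Let 0 < r₀ < ρ₀. Suppose u : ℂ → ℝ is harmonic on Ω, u(z) ≤ 1 for all z ∈ Ω, and for every boundary point ζ ∈ ∂Ω with |ζ| > r₀ one has limsup_{Ω ∋ z → ζ} u(z) ≤ 0. Then for every z ∈ Ω with |z| > r₀, u(z) ≤ (8/π)(r₀/|z|)^{1/α}(1 + C₁|z|^γ)^{1/(αγ)}. -/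
open Set

/-- `u : ℂ → ℝ` is harmonic on an open set `U ⊂ ℂ`: it is twice continuously
differentiable on `U` and its Laplacian `∂²u/∂x² + ∂²u/∂y²` vanishes on `U`. -/
def HarmonicOnSet (u : ℂ → ℝ) (U : Set ℂ) : Prop :=
  ContDiffOn ℝ 2 u U ∧
    ∀ z ∈ U,
      iteratedFDeriv ℝ 2 u z ![1, 1] + iteratedFDeriv ℝ 2 u z ![Complex.I, Complex.I] = 0

/-- The polar domain `{r e^{iθ} : 0 < r < ρ₀, φ₊(r) < θ < φ₋(r)}`. -/
def polarDomain (ρ₀ : ℝ) (φp φm : ℝ → ℝ) : Set ℂ :=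
  {z | ∃ r θ : ℝ, 0 < r ∧ r < ρ₀ ∧ φp r < θ ∧ θ < φm r ∧
      z = (r : ℂ) * Complex.exp (θ * Complex.I)}

open Filter Topology


def IsLoc (f : ℝ → ℝ) (V : ℂ → ℝ) (p : ℂ) : Prop :=
  ∃ F : ℂ → ℂ, AnalyticAt ℂ F p ∧ V =ᶠ[𝓝 p] fun z => f (F z).re

noncomputable def dd (v : ℂ) (V : ℂ → ℝ) (p : ℂ) : ℝ := fderiv ℝ V p v

theorem IsLoc.contDiffAt {f : ℝ → ℝ} {V : ℂ → ℝ} {p : ℂ} (hf : ContDiff ℝ 2 f)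
    (h : IsLoc f V p) : ContDiffAt ℝ 2 V p := by
  obtain ⟨F, hF, hV⟩ := h
  refine ContDiffAt.congr_of_eventuallyEq ?_ hV
  have h1 : ContDiffAt ℝ 2 F p := (hF.contDiffAt (n := 2)).restrict_scalars ℝ
  have h2 : ContDiffAt ℝ 2 (fun z => (F z).re) p :=
    Complex.reCLM.contDiff.contDiffAt.comp p h1
  exact hf.contDiffAt.comp p h2

theorem IsLoc.comp {f : ℝ → ℝ} {V : ℂ → ℝ} {q : ℂ} {Ψ : ℂ → ℂ}
    (h : IsLoc f V (Ψ q)) (hΨ : AnalyticAt ℂ Ψ q) : IsLoc f (fun z => V (Ψ z)) q := by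
  obtain ⟨F, hF, hV⟩ := h
  exact ⟨fun z => F (Ψ z), hF.comp hΨ, hΨ.continuousAt.eventually hV⟩

theorem dd_re {G : ℂ → ℂ} {z G' : ℂ} (h : HasDerivAt G G' z) {f : ℝ → ℝ} (hf : DifferentiableAt ℝ f (G z).re)
    (v : ℂ) : HasFDerivAt (fun z => f (G z).re)
      ((deriv f (G z).re) • (Complex.reCLM.comp
        ((ContinuousLinearMap.toSpanSingleton ℂ G').restrictScalars ℝ))) z := by
  have h1 : HasFDerivAt G ((ContinuousLinearMap.toSpanSingleton ℂ G').restrictScalars ℝ) z :=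
    h.hasFDerivAt.restrictScalars ℝ
  have h2 : HasFDerivAt (fun z => (G z).re) _ z := Complex.reCLM.hasFDerivAt.comp z h1
  exact hf.hasDerivAt.comp_hasFDerivAt z h2

theorem IsLoc.lap {f : ℝ → ℝ} {V : ℂ → ℝ} {p : ℂ} (hf : ContDiff ℝ 2 f)
    (hf2 : ∀ x, 0 ≤ deriv (deriv f) x)
    (h : IsLoc f V p) : 0 ≤ dd 1 (dd 1 V) p + dd Complex.I (dd Complex.I V) p := by
  obtain ⟨F, hF, hV⟩ := h
  have hfd : Differentiable ℝ f := hf.differentiable (by norm_num)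
  have hfd' : Differentiable ℝ (deriv f) := by
    have : ContDiff ℝ 1 (deriv f) := by
      have := (contDiff_succ_iff_deriv (n := 1) (f := f)).1 (by simpa [one_add_one_eq_two] using hf)
      exact this.2.2
    exact this.differentiable (by norm_num)
  have key : ∀ v : ℂ, dd v (dd v V) p =
      deriv (deriv f) (F p).re * (deriv F p * v).re ^ 2 +
        deriv f (F p).re * (deriv (deriv F) p * v * v).re := by
    intro v
    have e1 : dd v V =ᶠ[𝓝 p] fun z => deriv f (F z).re * (deriv F z * v).re := by
      filter_upwards [hV.eventuallyEq_nhds, hF.eventually_analyticAt] with z hz hz2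
      rw [dd, hz.fderiv_eq, (dd_re hz2.differentiableAt.hasDerivAt (hfd _) v).fderiv]
      simp [mul_comm]
    rw [dd, e1.fderiv_eq]
    have a1 := dd_re hF.differentiableAt.hasDerivAt (hfd' (F p).re) v
    have hd : HasDerivAt (fun z => deriv F z * v) (deriv (deriv F) p * v) p :=
      hF.deriv.differentiableAt.hasDerivAt.mul_const v
    have a2 := dd_re hd (f := fun x => x) differentiableAt_id v
    have a3 := a1.mul a2
    have a4 := a3.fderiv

    refine (DFunLike.congr_fun a4 v).trans ?_
    simp
    ring
  rw [key 1, key Complex.I]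
  have := hf2 (F p).re
  have e : (deriv (deriv F) p * Complex.I * Complex.I).re = - (deriv (deriv F) p * 1 * 1).re := by
    rw [mul_assoc, Complex.I_mul_I]; simp
  rw [e]
  nlinarith [mul_nonneg this (sq_nonneg (deriv F p * 1).re), mul_nonneg this (sq_nonneg (deriv F p * Complex.I).re)]


theorem leib {S : Set ℝ} (hS : IsOpen S) (g g' : ℝ → ℝ → ℝ) (a b : ℝ)
    (hg : ContinuousOn (fun q : ℝ × ℝ => g q.1 q.2) (S ×ˢ univ))
    (hg' : ContinuousOn (fun q : ℝ × ℝ => g' q.1 q.2) (S ×ˢ univ))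
    (hd : ∀ t ∈ S, ∀ y, HasDerivAt (fun s => g s y) (g' t y) t) {t : ℝ} (ht : t ∈ S) :
    HasDerivAt (fun t => ∫ y in a..b, g t y) (∫ y in a..b, g' t y) t := by
  obtain ⟨r, hr, hrS⟩ := Metric.nhds_basis_closedBall.mem_iff.1 (hS.mem_nhds ht)
  have hK : IsCompact (Metric.closedBall t r ×ˢ uIcc a b) :=
    (isCompact_closedBall t r).prod isCompact_uIcc
  obtain ⟨C, hC⟩ := hK.exists_bound_of_continuousOn
    (hg'.mono (prod_mono hrS (subset_univ _)))
  have hgc : ∀ s ∈ S, Continuous (g s) := by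
    intro s hs
    have : Continuous (fun y : ℝ => ((s, y) : ℝ × ℝ)) := by fun_prop
    have h2 := hg.comp_continuous this (fun y => ⟨hs, mem_univ _⟩)
    exact h2
  have hgc' : ∀ s ∈ S, Continuous (g' s) := by
    intro s hs
    have : Continuous (fun y : ℝ => ((s, y) : ℝ × ℝ)) := by fun_prop
    have h2 := hg'.comp_continuous this (fun y => ⟨hs, mem_univ _⟩)
    exact h2
  refine (intervalIntegral.hasDerivAt_integral_of_dominated_loc_of_deriv_le
    (s := Metric.closedBall t r) (bound := fun _ => C) (Metric.closedBall_mem_nhds t hr) ?_ ?_ ?_ ?_ ?_ ?_).2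
  · filter_upwards [hS.mem_nhds ht] with s hs
    exact (hgc s hs).aestronglyMeasurable
  · exact (hgc t ht).intervalIntegrable _ _
  · exact (hgc' t ht).aestronglyMeasurable
  · refine Eventually.of_forall fun y hy s hs => ?_
    exact hC (s, y) ⟨hs, uIoc_subset_uIcc hy⟩
  · exact intervalIntegrable_const
  · exact Eventually.of_forall fun y hy s hs => hd s (hrS hs) y

theorem dd_contDiffAt {V : ℂ → ℝ} {p : ℂ} (v : ℂ) (h : ContDiffAt ℝ 2 V p) :
    ContDiffAt ℝ 1 (dd v V) p := by
  have : ContDiffAt ℝ 1 (fderiv ℝ V) p := h.fderiv_right (by norm_num [one_add_one_eq_two])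
  exact this.clm_apply contDiffAt_const

theorem dd_continuousAt {V : ℂ → ℝ} {p : ℂ} (v : ℂ) (h : ContDiffAt ℝ 1 V p) :
    ContinuousAt (dd v V) p := by
  have : ContDiffAt ℝ 0 (fderiv ℝ V) p := h.fderiv_right (by norm_num)
  exact (this.clm_apply (contDiffAt_const (c := v))).continuousAt

theorem dd_hasDerivAt_x {V : ℂ → ℝ} {t y : ℝ} (h : ContDiffAt ℝ 1 V (t + y * Complex.I)) :
    HasDerivAt (fun s : ℝ => V (s + y * Complex.I)) (dd 1 V (t + y * Complex.I)) t := by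
  have h1 : HasDerivAt (fun s : ℝ => (s : ℂ) + y * Complex.I) 1 t :=
    (Complex.ofRealCLM.hasDerivAt (x := t)).add_const _
  exact (h.differentiableAt (by norm_num)).hasFDerivAt.comp_hasDerivAt t h1

theorem dd_hasDerivAt_y {V : ℂ → ℝ} {t y : ℝ} (h : ContDiffAt ℝ 1 V (t + y * Complex.I)) :
    HasDerivAt (fun s : ℝ => V (t + s * Complex.I)) (dd Complex.I V (t + y * Complex.I)) y := by
  have h1 : HasDerivAt (fun s : ℝ => (t : ℂ) + s * Complex.I) Complex.I y := by
    simpa using ((Complex.ofRealCLM.hasDerivAt (x := y)).mul_const Complex.I).const_add (t : ℂ)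
  exact (h.differentiableAt (by norm_num)).hasFDerivAt.comp_hasDerivAt y h1

theorem cont_slab {S : Set ℝ} {W : ℂ → ℝ} (h : ∀ p : ℂ, p.re ∈ S → ContinuousAt W p) :
    ContinuousOn (fun q : ℝ × ℝ => W (q.1 + q.2 * Complex.I)) (S ×ˢ univ) := by
  intro q hq
  have : ContinuousAt W (q.1 + q.2 * Complex.I) := h _ (by simpa using hq.1)
  have h2 : ContinuousAt (fun q : ℝ × ℝ => (q.1 : ℂ) + q.2 * Complex.I) q := by fun_prop
  exact (ContinuousAt.comp (f := fun q : ℝ × ℝ => (q.1 : ℂ) + q.2 * Complex.I) (x := q) this h2).continuousWithinAt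


theorem wirt0 {g g' : ℝ → ℝ} (hg : ∀ y, HasDerivAt g (g' y) y) (hg' : Continuous g')
    {P Q L μ : ℝ} (hPQ : P ≤ Q) (hL : 0 < L) (hQP : Q - P ≤ Real.pi * L) (hgP : g P = 0) (hgQ : g Q = 0)
    (hμ : 0 < μ) (hμL : μ < 1 / L) :
    μ ^ 2 * ∫ y in P..Q, g y ^ 2 ≤ ∫ y in P..Q, g' y ^ 2 := by
  have hgc : Continuous g := continuous_iff_continuousAt.2 fun y => (hg y).continuousAt
  set c := (P + Q) / 2 with hc
  have hcos : ∀ y ∈ Icc P Q, 0 < Real.cos (μ * (y - c)) := by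
    intro y hy
    have h1 : μ * L < 1 := by rwa [lt_div_iff₀ hL] at hμL
    have hb : |y - c| ≤ Real.pi * L / 2 := by
      rw [abs_le]; constructor <;> simp only [hc] <;> linarith [hy.1, hy.2]
    have h2 : |μ * (y - c)| < Real.pi / 2 := by
      rw [abs_mul, abs_of_pos hμ]
      calc μ * |y - c| ≤ μ * (Real.pi * L / 2) := by gcongr
        _ = (μ * L) * (Real.pi / 2) := by ring
        _ < 1 * (Real.pi / 2) := by
          apply mul_lt_mul_of_pos_right h1 (by positivity)
        _ = _ := one_mul _
    exact Real.cos_pos_of_mem_Ioo (abs_lt.1 h2)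
  set T : ℝ → ℝ := fun y => Real.tan (μ * (y - c)) with hT
  have hTd : ∀ y ∈ Icc P Q, HasDerivAt T (μ * (1 + T y ^ 2)) y := by
    intro y hy
    have h1 : HasDerivAt (fun y => μ * (y - c)) (μ * 1) y := ((hasDerivAt_id y).sub_const c).const_mul μ
    have h2 := (Real.hasDerivAt_tan (hcos y hy).ne').comp y h1
    refine h2.congr_deriv ?_
    have := (hcos y hy).ne'
    simp only [hT, Real.tan_eq_sin_div_cos]
    field_simp
    rw [add_comm, Real.sin_sq_add_cos_sq]
  have hTc : ContinuousOn T (Icc P Q) := fun y hy => (hTd y hy).continuousAt.continuousWithinAt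
  set h' : ℝ → ℝ := fun y => μ * (μ * (1 + T y ^ 2)) * g y ^ 2 + μ * T y * (2 * g y * g' y) with hh'
  have hh'c : ContinuousOn h' (Icc P Q) := by
    have := hgc.continuousOn (s := Icc P Q)
    have := hg'.continuousOn (s := Icc P Q)
    fun_prop
  have hint : ∫ y in P..Q, h' y = 0 := by
    have := intervalIntegral.integral_eq_sub_of_hasDerivAt (a := P) (b := Q)
      (f := fun y => μ * T y * g y ^ 2) (f' := h') ?_ ?_
    · rw [this, hgP, hgQ]; simp
    · intro y hy
      rw [uIcc_of_le hPQ] at hy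
      have := ((hTd y hy).const_mul μ).mul ((hg y).pow 2)
      refine this.congr_deriv ?_
      simp only [hh']; norm_num
    · exact hh'c.intervalIntegrable_of_Icc hPQ
  have i1 : IntervalIntegrable (fun y => g' y ^ 2) MeasureTheory.volume P Q := (hg'.pow 2).intervalIntegrable _ _
  have i2 : IntervalIntegrable (fun y => μ ^ 2 * g y ^ 2) MeasureTheory.volume P Q :=
    (continuous_const.mul (hgc.pow 2)).intervalIntegrable _ _
  have i3 : IntervalIntegrable h' MeasureTheory.volume P Q := hh'c.intervalIntegrable_of_Icc hPQ
  have hpos : 0 ≤ ∫ y in P..Q, ((g' y ^ 2 - μ ^ 2 * g y ^ 2) + h' y) := by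
    apply intervalIntegral.integral_nonneg hPQ
    intro y hy
    have : (g' y ^ 2 - μ ^ 2 * g y ^ 2) + h' y = (g' y + μ * T y * g y) ^ 2 := by
      simp only [hh']; ring
    rw [this]; positivity
  rw [intervalIntegral.integral_add (i1.sub i2) i3, intervalIntegral.integral_sub i1 i2, hint,
    intervalIntegral.integral_const_mul] at hpos
  linarith

theorem wirt {g g' : ℝ → ℝ} (hg : ∀ y, HasDerivAt g (g' y) y) (hg' : Continuous g')
    {P Q L Y : ℝ} (hPQ : P ≤ Q) (hL : 0 < L) (hQP : Q - P ≤ Real.pi * L)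
    (hg0 : ∀ y, y ∉ Ioo P Q → g y = 0) (hYP : -Y ≤ P) (hQY : Q ≤ Y) :
    (1 / L) ^ 2 * ∫ y in (-Y)..Y, g y ^ 2 ≤ ∫ y in (-Y)..Y, g' y ^ 2 := by
  have hgc : Continuous g := continuous_iff_continuousAt.2 fun y => (hg y).continuousAt
  have i2 : ∀ a b, IntervalIntegrable (fun y => g y ^ 2) MeasureTheory.volume a b := fun a b =>
    (hgc.pow 2).intervalIntegrable _ _
  have e : ∫ y in (-Y)..Y, g y ^ 2 = ∫ y in P..Q, g y ^ 2 := by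
    rw [← intervalIntegral.integral_add_adjacent_intervals (i2 (-Y) P) (i2 P Y),
      ← intervalIntegral.integral_add_adjacent_intervals (i2 P Q) (i2 Q Y)]
    have z1 : ∫ y in (-Y)..P, g y ^ 2 = 0 := by
      rw [intervalIntegral.integral_congr (g := fun _ => (0:ℝ))]
      · simp
      intro y hy
      rw [uIcc_of_le hYP] at hy
      simp [hg0 y (fun h => absurd h.1 (not_lt.2 hy.2))]
    have z2 : ∫ y in Q..Y, g y ^ 2 = 0 := by
      rw [intervalIntegral.integral_congr (g := fun _ => (0:ℝ))]
      · simp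
      intro y hy
      rw [uIcc_of_le hQY] at hy
      simp [hg0 y (fun h => absurd h.2 (not_lt.2 hy.1))]
    rw [z1, z2]; ring
  rw [e]
  have h2 : ∫ y in P..Q, g' y ^ 2 ≤ ∫ y in (-Y)..Y, g' y ^ 2 := by
    apply intervalIntegral.integral_mono_interval hYP hPQ hQY
    · exact Eventually.of_forall fun y => sq_nonneg _
    · exact (hg'.pow 2).intervalIntegrable _ _
  refine le_trans ?_ h2
  have ht : Tendsto (fun μ : ℝ => μ ^ 2 * ∫ y in P..Q, g y ^ 2) (𝓝[<] (1 / L))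
      (𝓝 ((1 / L) ^ 2 * ∫ y in P..Q, g y ^ 2)) := by
    apply Tendsto.mono_left _ nhdsWithin_le_nhds
    apply Continuous.tendsto'
    · fun_prop
    · rfl
  refine le_of_tendsto ht ?_
  have : Ioo 0 (1 / L) ∈ 𝓝[<] (1 / L) := Ioo_mem_nhdsLT (by positivity)
  filter_upwards [this] with μ hμ
  exact wirt0 hg hg' hPQ hL hQP (hg0 _ (by simp)) (hg0 _ (by simp)) hμ.1 hμ.2

section A
variable {S : Set ℝ} {f : ℝ → ℝ} {V : ℂ → ℝ}

noncomputable def A0 (V : ℂ → ℝ) (Y t : ℝ) : ℝ := ∫ y in (-Y)..Y, V (t + y * Complex.I) ^ 2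
noncomputable def A1 (V : ℂ → ℝ) (Y t : ℝ) : ℝ :=
  ∫ y in (-Y)..Y, 2 * (V (t + y * Complex.I) * dd 1 V (t + y * Complex.I))
noncomputable def A2 (V : ℂ → ℝ) (Y t : ℝ) : ℝ :=
  ∫ y in (-Y)..Y, 2 * (dd 1 V (t + y * Complex.I) ^ 2 + V (t + y * Complex.I) * dd 1 (dd 1 V) (t + y * Complex.I))

theorem slice_cont {W : ℂ → ℝ} (h : ∀ p : ℂ, p.re ∈ S → ContinuousAt W p) {t : ℝ} (ht : t ∈ S) :
    Continuous (fun y : ℝ => W (t + y * Complex.I)) := by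
  have : Continuous (fun y : ℝ => ((t, y) : ℝ × ℝ)) := by fun_prop
  exact (cont_slab h).comp_continuous this (fun y => ⟨ht, mem_univ _⟩)

theorem A0_deriv (hS : IsOpen S) (hV : ∀ p : ℂ, p.re ∈ S → ContDiffAt ℝ 2 V p) (Y : ℝ) {t : ℝ} (ht : t ∈ S) :
    HasDerivAt (A0 V Y) (A1 V Y t) t := by
  have c0 : ∀ p : ℂ, p.re ∈ S → ContinuousAt V p := fun p hp => (hV p hp).continuousAt
  have c1 : ∀ p : ℂ, p.re ∈ S → ContinuousAt (dd 1 V) p := fun p hp =>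
    (dd_contDiffAt 1 (hV p hp)).continuousAt
  refine leib hS (fun t y => V (t + y * Complex.I) ^ 2)
    (fun t y => 2 * (V (t + y * Complex.I) * dd 1 V (t + y * Complex.I))) _ _ ?_ ?_ ?_ ht
  · exact (cont_slab c0).pow 2
  · exact ((cont_slab c0).mul (cont_slab c1)).const_smul (2:ℝ)
  · intro t ht y
    have := (dd_hasDerivAt_x (V := V) (t := t) (y := y) ((hV _ (by simpa using ht)).of_le (by norm_num))).pow 2
    refine this.congr_deriv ?_
    norm_num; ring

theorem A1_deriv (hS : IsOpen S) (hV : ∀ p : ℂ, p.re ∈ S → ContDiffAt ℝ 2 V p) (Y : ℝ) {t : ℝ} (ht : t ∈ S) :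
    HasDerivAt (A1 V Y) (A2 V Y t) t := by
  have c0 : ∀ p : ℂ, p.re ∈ S → ContinuousAt V p := fun p hp => (hV p hp).continuousAt
  have c1 : ∀ p : ℂ, p.re ∈ S → ContinuousAt (dd 1 V) p := fun p hp =>
    (dd_contDiffAt 1 (hV p hp)).continuousAt
  have c2 : ∀ p : ℂ, p.re ∈ S → ContinuousAt (dd 1 (dd 1 V)) p := fun p hp =>
    dd_continuousAt 1 (dd_contDiffAt 1 (hV p hp))
  refine leib hS (fun t y => 2 * (V (t + y * Complex.I) * dd 1 V (t + y * Complex.I)))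
    (fun t y => 2 * (dd 1 V (t + y * Complex.I) ^ 2 + V (t + y * Complex.I) * dd 1 (dd 1 V) (t + y * Complex.I))) _ _ ?_ ?_ ?_ ht
  · exact ((cont_slab c0).mul (cont_slab c1)).const_smul (2:ℝ)
  · exact (((cont_slab c1).pow 2).add ((cont_slab c0).mul (cont_slab c2))).const_smul (2:ℝ)
  · intro t ht y
    have hp := hV (t + y * Complex.I) (by simpa using ht)
    have d1 := (dd_hasDerivAt_x (V := V) (t := t) (y := y) (hp.of_le (by norm_num)))
    have d2 := (dd_hasDerivAt_x (V := dd 1 V) (t := t) (y := y) (dd_contDiffAt 1 hp))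
    refine ((d1.mul d2).const_mul 2).congr_deriv ?_
    ring

theorem A_ineq (hf : ContDiff ℝ 2 f) (hf2 : ∀ x, 0 ≤ deriv (deriv f) x)
    (hV : ∀ p : ℂ, p.re ∈ S → IsLoc f V p) (hV0 : ∀ p, 0 ≤ V p) {t P Q L Y : ℝ} (ht : t ∈ S)
    (hPQ : P ≤ Q) (hL : 0 < L) (hQP : Q - P ≤ Real.pi * L)
    (hg0 : ∀ y : ℝ, y ∉ Ioo P Q → V (t + y * Complex.I) = 0) (hYP : -Y ≤ P) (hQY : Q ≤ Y) :
    0 ≤ A2 V Y t + 2 / L * A1 V Y t := by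
  have hC : ∀ p : ℂ, p.re ∈ S → ContDiffAt ℝ 2 V p := fun p hp => (hV p hp).contDiffAt hf
  have c0 := slice_cont (fun p hp => (hC p hp).continuousAt) ht
  have c1 := slice_cont (fun p hp => (dd_contDiffAt 1 (hC p hp)).continuousAt) ht
  have c2 := slice_cont (fun p hp => dd_continuousAt 1 (dd_contDiffAt 1 (hC p hp))) ht
  have cy := slice_cont (fun p hp => (dd_contDiffAt Complex.I (hC p hp)).continuousAt) ht
  have cyy := slice_cont (fun p hp => dd_continuousAt Complex.I (dd_contDiffAt Complex.I (hC p hp))) ht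
  have hre : ∀ y : ℝ, ((t : ℂ) + y * Complex.I).re ∈ S := fun y => by simpa using ht
  have hYY : -Y ≤ Y := by linarith
  set g : ℝ → ℝ := fun y => V (t + y * Complex.I)
  set gx : ℝ → ℝ := fun y => dd 1 V (t + y * Complex.I)
  set gxx : ℝ → ℝ := fun y => dd 1 (dd 1 V) (t + y * Complex.I)
  set gy : ℝ → ℝ := fun y => dd Complex.I V (t + y * Complex.I)
  set gyy : ℝ → ℝ := fun y => dd Complex.I (dd Complex.I V) (t + y * Complex.I)
  have dg : ∀ y, HasDerivAt g (gy y) y := fun y =>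
    dd_hasDerivAt_y ((hC _ (hre y)).of_le (by norm_num))
  have dgy : ∀ y, HasDerivAt gy (gyy y) y := fun y => dd_hasDerivAt_y (dd_contDiffAt _ (hC _ (hre y)))
  have hw := wirt dg cy hPQ hL hQP hg0 hYP hQY
  have ibp : ∫ y in (-Y)..Y, (gy y * gy y + g y * gyy y) = 0 := by
    rw [intervalIntegral.integral_eq_sub_of_hasDerivAt (f := fun y => g y * gy y)]
    · have z1 : g Y = 0 := hg0 Y (fun h => absurd h.2 (not_lt.2 hQY))
      have z2 : g (-Y) = 0 := hg0 (-Y) (fun h => absurd h.1 (not_lt.2 hYP))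
      simp [z1, z2]
    · intro y _; exact (dg y).mul (dgy y)
    · apply Continuous.intervalIntegrable; fun_prop
  have ii : ∀ {h : ℝ → ℝ}, Continuous h → IntervalIntegrable h MeasureTheory.volume (-Y) Y :=
    fun h => h.intervalIntegrable _ _
  have e1 : A2 V Y t + 2 / L * A1 V Y t = ∫ y in (-Y)..Y,
      (2 * (gx y ^ 2 + g y * gxx y) + 2 / L * (2 * (g y * gx y))) := by
    rw [intervalIntegral.integral_add (ii (by fun_prop)) (ii (by fun_prop)),
      intervalIntegral.integral_const_mul (2 / L)]
    rfl
  have e2 : ∫ y in (-Y)..Y, (2 * (gx y + 1 / L * g y) ^ 2 + 2 * ((gy y ^ 2 - (1 / L) ^ 2 * g y ^ 2)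
      - (gy y * gy y + g y * gyy y))) ≤ ∫ y in (-Y)..Y,
      (2 * (gx y ^ 2 + g y * gxx y) + 2 / L * (2 * (g y * gx y))) := by
    apply intervalIntegral.integral_mono_on hYY (ii (by fun_prop)) (ii (by fun_prop))
    intro y _
    have l := (hV _ (hre y)).lap hf hf2
    have := mul_nonneg (hV0 (t + y * Complex.I)) l
    change 0 ≤ g y * (gxx y + gyy y) at this
    have : 2 / L * (2 * (g y * gx y)) = 4 * (1 / L) * g y * gx y := by ring
    rw [this]
    nlinarith
  have e3 : 0 ≤ ∫ y in (-Y)..Y, 2 * (gx y + 1 / L * g y) ^ 2 :=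
    intervalIntegral.integral_nonneg hYY fun y _ => by positivity
  rw [intervalIntegral.integral_add (ii (by fun_prop)) (ii (by fun_prop)),
    intervalIntegral.integral_const_mul,
    intervalIntegral.integral_const_mul,
    intervalIntegral.integral_sub (ii (by fun_prop)) (ii (by fun_prop)), ibp,
    intervalIntegral.integral_sub (ii (by fun_prop)) (ii (by fun_prop)),
    intervalIntegral.integral_const_mul ((1 / L) ^ 2)] at e2
  rw [intervalIntegral.integral_const_mul] at e3
  rw [e1]
  linarith
end A


theorem dd_periodic {V : ℂ → ℝ} {a : ℂ} (h : ∀ p, V (p + a) = V p) (v p : ℂ) :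
    dd v V (p + a) = dd v V p := by
  unfold dd
  have : (fun q => V (q + a)) = V := funext h
  conv_rhs => rw [← this]
  rw [fderiv_comp_add_right]

theorem G_mono {f : ℝ → ℝ} {V : ℂ → ℝ} (hf : ContDiff ℝ 2 f) (hf2 : ∀ x, 0 ≤ deriv (deriv f) x)
    (hV : ∀ p : ℂ, p.re < 0 → IsLoc f V p) (hper : ∀ p, V (p + 2 * Real.pi * Complex.I) = V p)
    {M : ℝ} (hM : ∀ p, V p ≤ M) :
    MonotoneOn (fun l : ℝ => ∫ θ in (-Real.pi)..Real.pi, V (l + θ * Complex.I)) (Iio 0) := by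
  have hpi : -Real.pi ≤ Real.pi := by linarith [Real.pi_pos]
  have hC : ∀ p : ℂ, p.re ∈ Iio (0:ℝ) → ContDiffAt ℝ 2 V p := fun p hp => (hV p hp).contDiffAt hf
  set G : ℝ → ℝ := fun l : ℝ => ∫ θ in (-Real.pi)..Real.pi, V (l + θ * Complex.I) with hG
  set G1 : ℝ → ℝ := fun l : ℝ => ∫ θ in (-Real.pi)..Real.pi, dd 1 V (l + θ * Complex.I) with hG1
  set G2 : ℝ → ℝ := fun l : ℝ => ∫ θ in (-Real.pi)..Real.pi, dd 1 (dd 1 V) (l + θ * Complex.I) with hG2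
  have d0 : ∀ l < 0, HasDerivAt G (G1 l) l := by
    intro l hl
    refine leib isOpen_Iio (fun l θ => V (l + θ * Complex.I)) (fun l θ => dd 1 V (l + θ * Complex.I))
      _ _ (cont_slab fun p hp => (hC p hp).continuousAt)
      (cont_slab fun p hp => (dd_contDiffAt 1 (hC p hp)).continuousAt) ?_ hl
    intro t ht y
    exact dd_hasDerivAt_x ((hC _ (by simpa using ht)).of_le (by norm_num))
  have d1 : ∀ l < 0, HasDerivAt G1 (G2 l) l := by
    intro l hl
    refine leib isOpen_Iio (fun l θ => dd 1 V (l + θ * Complex.I)) (fun l θ => dd 1 (dd 1 V) (l + θ * Complex.I))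
      _ _ (cont_slab fun p hp => (dd_contDiffAt 1 (hC p hp)).continuousAt)
      (cont_slab fun p hp => dd_continuousAt 1 (dd_contDiffAt 1 (hC p hp))) ?_ hl
    intro t ht y
    exact dd_hasDerivAt_x (dd_contDiffAt 1 (hC _ (by simpa using ht)))
  have g2 : ∀ l < 0, 0 ≤ G2 l := by
    intro l hl
    have hre : ∀ y : ℝ, ((l : ℂ) + y * Complex.I).re ∈ Iio (0:ℝ) := fun y => by simpa using hl
    have c2 := slice_cont (fun p hp => dd_continuousAt 1 (dd_contDiffAt 1 (hC p hp))) (show l ∈ Iio (0:ℝ) from hl)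
    have cyy := slice_cont (fun p hp => dd_continuousAt Complex.I (dd_contDiffAt Complex.I (hC p hp)))
      (show l ∈ Iio (0:ℝ) from hl)
    have e : ∫ y in (-Real.pi)..Real.pi, dd Complex.I (dd Complex.I V) (l + y * Complex.I) = 0 := by
      rw [intervalIntegral.integral_eq_sub_of_hasDerivAt (f := fun y : ℝ => dd Complex.I V (l + y * Complex.I))]
      · have := dd_periodic hper Complex.I (l + (-Real.pi : ℝ) * Complex.I)
        rw [← this]
        have : (l + (-Real.pi : ℝ) * Complex.I + 2 * Real.pi * Complex.I : ℂ) = l + Real.pi * Complex.I := by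
          push_cast; ring
        rw [this, sub_self]
      · intro y _
        exact dd_hasDerivAt_y (dd_contDiffAt _ (hC _ (hre y)))
      · exact cyy.intervalIntegrable _ _
    have : 0 ≤ ∫ y in (-Real.pi)..Real.pi, (dd 1 (dd 1 V) (l + y * Complex.I) +
        dd Complex.I (dd Complex.I V) (l + y * Complex.I)) :=
      intervalIntegral.integral_nonneg hpi fun y _ => (hV _ (hre y)).lap hf hf2
    rw [intervalIntegral.integral_add (c2.intervalIntegrable _ _) (cyy.intervalIntegrable _ _), e] at this
    simpa [hG2] using this
  have m1 : MonotoneOn G1 (Iio 0) := by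
    apply monotoneOn_of_deriv_nonneg (convex_Iio 0)
    · exact fun l hl => (d1 l hl).continuousAt.continuousWithinAt
    · intro l hl; rw [interior_Iio] at hl; exact (d1 l hl).differentiableAt.differentiableWithinAt
    · intro l hl; rw [interior_Iio] at hl; rw [(d1 l hl).deriv]; exact g2 l hl
  have hbd : ∀ l < 0, G l ≤ 2 * Real.pi * M := by
    intro l hl
    have c0 := slice_cont (fun p hp => (hC p hp).continuousAt) (show l ∈ Iio (0:ℝ) from hl)
    have : G l ≤ ∫ y in (-Real.pi)..Real.pi, M :=
      intervalIntegral.integral_mono_on hpi (c0.intervalIntegrable _ _) (by simp) fun y _ => hM _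
    refine this.trans (le_of_eq ?_)
    rw [intervalIntegral.integral_const, smul_eq_mul]; ring
  have pos1 : ∀ s < 0, 0 ≤ G1 s := by
    intro s hs
    by_contra hneg
    push Not at hneg
    have anti : AntitoneOn (fun x => G x - G1 s * (x - s)) (Iic s) := by
      have hd : ∀ x ≤ s, HasDerivAt (fun x => G x - G1 s * (x - s)) (G1 x - G1 s * 1) x := fun x hx =>
        (d0 x (lt_of_le_of_lt hx hs)).sub (((hasDerivAt_id x).sub_const s).const_mul (G1 s))
      apply antitoneOn_of_deriv_nonpos (convex_Iic s)
      · exact fun x hx => (hd x hx).continuousAt.continuousWithinAt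
      · intro x hx; rw [interior_Iic] at hx; exact (hd x (le_of_lt hx)).differentiableAt.differentiableWithinAt
      · intro x hx; rw [interior_Iic] at hx; rw [(hd x (le_of_lt hx)).deriv]
        have := m1 (show x ∈ Iio (0:ℝ) from lt_trans hx hs) hs (le_of_lt hx)
        linarith
    obtain ⟨K, hK⟩ : ∃ K : ℝ, 0 ≤ K ∧ 2 * Real.pi * M - G s < (- G1 s) * K := by
      refine ⟨(|2 * Real.pi * M - G s| + 1) / (- G1 s), by have : 0 < -G1 s := by linarith
                                                           positivity, ?_⟩
      rw [mul_div_cancel₀ _ (by linarith : -G1 s ≠ 0)]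
      have := le_abs_self (2 * Real.pi * M - G s)
      linarith
    have h1 := anti (show s - K ∈ Iic s by simp [hK.1]) (show s ∈ Iic s by simp) (by linarith [hK.1])
    have h2 := hbd (s - K) (by linarith [hK.1])
    simp only at h1
    nlinarith [hK.2]
  apply monotoneOn_of_deriv_nonneg (convex_Iio 0)
  · exact fun l hl => (d0 l hl).continuousAt.continuousWithinAt
  · intro l hl; rw [interior_Iio] at hl; exact (d0 l hl).differentiableAt.differentiableWithinAt
  · intro l hl; rw [interior_Iio] at hl; rw [(d0 l hl).deriv]; exact pos1 l hl

noncomputable def yb (y0 c θ : ℝ) : ℝ := y0 + c * (Real.log (Real.sin (θ / 2)) - Real.log (Real.cos (θ / 2)))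

theorem yb_deriv (y0 c : ℝ) {θ : ℝ} (h : θ ∈ Ioo 0 Real.pi) : HasDerivAt (yb y0 c) (c / Real.sin θ) θ := by
  have hs : 0 < Real.sin (θ / 2) := Real.sin_pos_of_pos_of_lt_pi (by linarith [h.1]) (by linarith [h.2, h.1])
  have hc : 0 < Real.cos (θ / 2) := Real.cos_pos_of_mem_Ioo ⟨by linarith [h.1, Real.pi_pos], by linarith [h.2]⟩
  have h0 : HasDerivAt (fun θ : ℝ => θ / 2) (1 / 2) θ := (hasDerivAt_id θ).div_const 2
  have h1 := (h0.sin).log hs.ne'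
  have h2 := (h0.cos).log hc.ne'
  have h3 := ((h1.sub h2).const_mul c).const_add y0
  refine h3.congr_deriv ?_
  have e : Real.sin θ = 2 * Real.sin (θ / 2) * Real.cos (θ / 2) := by
    rw [← Real.sin_two_mul]; congr 1; ring
  rw [e]
  field_simp
  ring_nf
  have e2 := Real.sin_sq_add_cos_sq (θ * (1/2))
  linear_combination c * e2

theorem cov {g : ℝ → ℝ} (hg : Continuous g) (hg0 : ∀ y, 0 ≤ g y) {Y : ℝ} (hY : ∀ y, y ∉ Ioo (-Y) Y → g y = 0)
    {δ B y0 : ℝ} (hδ : 0 < δ) (hB : 0 < B) (hYp : 0 ≤ Y) (hgB : ∫ y in (-Y)..Y, g y ^ 2 ≤ B) :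
    ∫ θ in (0:ℝ)..Real.pi, g (yb y0 (2 * δ / Real.pi) θ) ≤ Real.sqrt (Real.pi * B / δ) := by
  set c := 2 * δ / Real.pi with hc
  have hpi := Real.pi_pos
  have hcpos : 0 < c := by positivity
  have hsin : ∀ θ ∈ Ioo 0 Real.pi, 0 < Real.sin θ := fun θ h => Real.sin_pos_of_pos_of_lt_pi h.1 h.2
  have hder : ∀ θ ∈ Ioo 0 Real.pi, HasDerivWithinAt (yb y0 c) (c / Real.sin θ) (Ioo 0 Real.pi) θ :=
    fun θ h => (yb_deriv y0 c h).hasDerivWithinAt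
  have hinj : InjOn (yb y0 c) (Ioo 0 Real.pi) := by
    apply StrictMonoOn.injOn
    apply strictMonoOn_of_deriv_pos (convex_Ioo _ _)
    · exact fun θ h => (yb_deriv y0 c h).continuousAt.continuousWithinAt
    · intro θ h
      rw [interior_Ioo] at h
      rw [(yb_deriv y0 c h).deriv]
      exact div_pos hcpos (hsin θ h)
  have hsupp : Function.support (fun y => g y ^ 2) ⊆ Ioc (-Y) Y := by
    intro y hy
    by_contra hcon
    apply hy
    have : g y = 0 := hY y (fun h => hcon ⟨h.1, h.2.le⟩)
    simp [this]
  have hint : MeasureTheory.Integrable (fun y => g y ^ 2) := by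
    apply Continuous.integrable_of_hasCompactSupport (hg.pow 2)
    apply HasCompactSupport.intro (isCompact_Icc (a := -Y) (b := Y))
    intro y hy
    have : g y = 0 := hY y (fun h => hy ⟨h.1.le, h.2.le⟩)
    simp [this]
  have hI2 : MeasureTheory.IntegrableOn (fun y => g y ^ 2) (yb y0 c '' Ioo 0 Real.pi) := hint.integrableOn
  have hI3 := (MeasureTheory.integrableOn_image_iff_integrableOn_abs_deriv_smul measurableSet_Ioo hder hinj _).1 hI2
  have hI4 := MeasureTheory.integral_image_eq_integral_abs_deriv_smul measurableSet_Ioo hder hinj (fun y => g y ^ 2)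
  have hI5 : ∫ θ in Ioo 0 Real.pi, |c / Real.sin θ| • g (yb y0 c θ) ^ 2 ≤ B := by
    rw [← hI4]
    calc _ ≤ ∫ y, g y ^ 2 := MeasureTheory.setIntegral_le_integral hint (Eventually.of_forall fun y => sq_nonneg _)
      _ = ∫ y in (-Y)..Y, g y ^ 2 := (intervalIntegral.integral_eq_integral_of_support_subset hsupp).symm
      _ ≤ B := hgB
  set k := Real.sqrt (Real.pi * B / (4 * δ)) with hk
  have hkpos : 0 < k := Real.sqrt_pos.2 (by positivity)
  have hksq : k * k = Real.pi * B / (4 * δ) := Real.mul_self_sqrt (by positivity)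
  have hsinI : MeasureTheory.IntegrableOn Real.sin (Ioo 0 Real.pi) :=
    (Real.continuous_sin.integrableOn_Icc).mono_set Ioo_subset_Icc_self
  have hsint : ∫ θ in Ioo 0 Real.pi, Real.sin θ = 2 := by
    rw [← MeasureTheory.integral_Ioc_eq_integral_Ioo, ← intervalIntegral.integral_of_le hpi.le, integral_sin]
    norm_num
  have hle : ∫ θ in Ioo 0 Real.pi, g (yb y0 c θ) ≤
      ∫ θ in Ioo 0 Real.pi, (k / 2 * Real.sin θ + 1 / (2 * k * c) * (|c / Real.sin θ| • g (yb y0 c θ) ^ 2)) := by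
    apply MeasureTheory.integral_mono_of_nonneg
    · exact Eventually.of_forall fun θ => hg0 _
    · exact (hsinI.const_mul _).add (hI3.const_mul _)
    · refine (MeasureTheory.ae_restrict_iff' measurableSet_Ioo).2 (Eventually.of_forall fun θ hθ => ?_)
      have hs := hsin θ hθ
      simp only [smul_eq_mul]
      rw [abs_of_pos (div_pos hcpos hs)]
      set G := g (yb y0 c θ)
      set s := Real.sin θ
      have : k / 2 * s + 1 / (2 * k * c) * (c / s * G ^ 2) - G = (k * s - G) ^ 2 / (2 * k * s) := by
        field_simp
        ring
      have h2 : 0 ≤ (k * s - G) ^ 2 / (2 * k * s) := by positivity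
      linarith
  rw [MeasureTheory.integral_add (hsinI.const_mul _) (hI3.const_mul _), MeasureTheory.integral_const_mul,
    MeasureTheory.integral_const_mul, hsint] at hle
  rw [intervalIntegral.integral_of_le hpi.le, MeasureTheory.integral_Ioc_eq_integral_Ioo]
  refine hle.trans ?_
  have h6 : 1 / (2 * k * c) * ∫ θ in Ioo 0 Real.pi, |c / Real.sin θ| • g (yb y0 c θ) ^ 2 ≤ 1 / (2 * k * c) * B := by
    gcongr
  have h7 : 1 / (2 * k * c) * B = k := by
    rw [hc]
    have hk2 : k ^ 2 = Real.pi * B / (4 * δ) := by rw [sq, hksq]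
    field_simp
    rw [hk2]
    field_simp
    norm_num
  have h8 : Real.sqrt (Real.pi * B / δ) = 2 * k := by
    rw [show Real.pi * B / δ = 2 ^ 2 * (Real.pi * B / (4 * δ)) by field_simp; norm_num,
      Real.sqrt_mul (by norm_num), Real.sqrt_sq (by norm_num)]
  rw [h8]
  linarith


noncomputable def Psi (z0 : ℂ) (c : ℝ) (ζ : ℂ) : ℂ :=
  z0 - Complex.I * c * Complex.log ((1 + ζ) / (1 - ζ))

theorem quot_re_pos {ζ : ℂ} (h : ‖ζ‖ < 1) : 0 < ((1 + ζ) / (1 - ζ)).re := by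
  have hne : (1 - ζ) ≠ 0 := by
    intro h0
    have : ζ = 1 := (sub_eq_zero.1 h0).symm
    rw [this] at h; simp at h
  have hN : 0 < Complex.normSq (1 - ζ) := Complex.normSq_pos.2 hne
  have h2 : ζ.re ^ 2 + ζ.im ^ 2 < 1 := by
    have : Complex.normSq ζ < 1 := by
      rw [Complex.normSq_eq_norm_sq]; nlinarith [norm_nonneg ζ]
    rw [Complex.normSq_apply] at this; nlinarith
  rw [Complex.div_re, ← add_div]
  apply div_pos _ hN
  simp
  nlinarith

theorem Psi_analytic {z0 : ℂ} {c : ℝ} {ζ : ℂ} (h1 : 1 - ζ ≠ 0) (h2 : (1 + ζ) / (1 - ζ) ∈ Complex.slitPlane) :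
    AnalyticAt ℂ (Psi z0 c) ζ := by
  unfold Psi
  have a : AnalyticAt ℂ (fun ζ : ℂ => (1 + ζ) / (1 - ζ)) ζ :=
    (analyticAt_const.add analyticAt_id).div (analyticAt_const.sub analyticAt_id) h1
  exact analyticAt_const.sub (analyticAt_const.mul (a.clog h2))

theorem Psi_re (z0 : ℂ) (c : ℝ) (ζ : ℂ) : (Psi z0 c ζ).re = z0.re + c * ((1 + ζ) / (1 - ζ)).arg := by
  simp [Psi, Complex.log_im]

theorem quot_bd {θ : ℝ} (h : Real.sin (θ / 2) ≠ 0) :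
    1 - Complex.exp (θ * Complex.I) ≠ 0 ∧
    (1 + Complex.exp (θ * Complex.I)) / (1 - Complex.exp (θ * Complex.I)) =
      ((Real.cos (θ / 2) / Real.sin (θ / 2) : ℝ) : ℂ) * Complex.I := by
  set a := Complex.exp ((θ / 2 : ℝ) * Complex.I) with ha
  set b := Complex.exp (-((θ / 2 : ℝ) * Complex.I)) with hb
  have hab : a * b = 1 := by rw [ha, hb, ← Complex.exp_add]; simp
  have hthe : Complex.exp (θ * Complex.I) = a * a := by
    rw [ha, ← Complex.exp_add]; congr 1; push_cast; ring
  have hc : ((Real.cos (θ / 2) : ℝ) : ℂ) = (a + b) / 2 := by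
    rw [Complex.ofReal_cos, Complex.cos]; simp [ha, hb]
  have hs : ((Real.sin (θ / 2) : ℝ) : ℂ) = (b - a) * Complex.I / 2 := by
    rw [Complex.ofReal_sin, Complex.sin]; simp [ha, hb]
  have hs0 : ((Real.sin (θ / 2) : ℝ) : ℂ) ≠ 0 := by exact_mod_cast h
  have hba : b - a ≠ 0 := by
    intro h0; apply hs0; rw [hs, h0]; simp
  have ha0 : a ≠ 0 := Complex.exp_ne_zero _
  have h1 : 1 - a * a = a * (b - a) := by rw [mul_sub, hab]
  have h2 : 1 + a * a = a * (b + a) := by rw [mul_add, hab]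
  rw [hthe]
  refine ⟨?_, ?_⟩
  · rw [h1]; exact mul_ne_zero ha0 hba
  · rw [h1, h2, Complex.ofReal_div, hc, hs]
    have := Complex.I_ne_zero
    field_simp
    ring

theorem log_bd_pos {x : ℝ} (h : 0 < x) : Complex.log ((x : ℂ) * Complex.I) = Real.log x + (Real.pi / 2 : ℝ) * Complex.I := by
  rw [Complex.log_ofReal_mul h Complex.I_ne_zero, Complex.log_I]; push_cast; ring

theorem log_bd_neg {x : ℝ} (h : x < 0) : Complex.log ((x : ℂ) * Complex.I) = Real.log x - (Real.pi / 2 : ℝ) * Complex.I := by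
  have : (x : ℂ) * Complex.I = ((-x : ℝ) : ℂ) * (-Complex.I) := by push_cast; ring
  rw [this, Complex.log_ofReal_mul (by linarith) (by simp), Complex.log_neg_I, Real.log_neg_eq_log]; push_cast; ring

theorem Psi_bd_pos {t y0 δ θ : ℝ} (hθ : θ ∈ Ioo 0 Real.pi) :
    Psi (t + y0 * Complex.I) (2 * δ / Real.pi) (Complex.exp (θ * Complex.I)) =
      ((t + δ : ℝ) : ℂ) + (yb y0 (2 * δ / Real.pi) θ : ℝ) * Complex.I := by
  have hs : 0 < Real.sin (θ / 2) := Real.sin_pos_of_pos_of_lt_pi (by linarith [hθ.1]) (by linarith [hθ.2, hθ.1])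
  have hc : 0 < Real.cos (θ / 2) := Real.cos_pos_of_mem_Ioo ⟨by linarith [hθ.1, Real.pi_pos], by linarith [hθ.2]⟩
  have hpi : (Real.pi : ℂ) ≠ 0 := by exact_mod_cast Real.pi_ne_zero
  rw [Psi, (quot_bd hs.ne').2, log_bd_pos (div_pos hc hs), Real.log_div hc.ne' hs.ne', yb]
  push_cast
  field_simp
  ring_nf
  simp only [Complex.I_sq]
  ring

theorem Psi_bd_neg {t y0 δ θ : ℝ} (hθ : θ ∈ Ioo 0 Real.pi) :
    Psi (t + y0 * Complex.I) (2 * δ / Real.pi) (Complex.exp ((-θ : ℝ) * Complex.I)) =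
      ((t - δ : ℝ) : ℂ) + (yb y0 (2 * δ / Real.pi) θ : ℝ) * Complex.I := by
  have hs : 0 < Real.sin (θ / 2) := Real.sin_pos_of_pos_of_lt_pi (by linarith [hθ.1]) (by linarith [hθ.2, hθ.1])
  have hc : 0 < Real.cos (θ / 2) := Real.cos_pos_of_mem_Ioo ⟨by linarith [hθ.1, Real.pi_pos], by linarith [hθ.2]⟩
  have hpi : (Real.pi : ℂ) ≠ 0 := by exact_mod_cast Real.pi_ne_zero
  have hs' : Real.sin (-θ / 2) = - Real.sin (θ / 2) := by rw [neg_div, Real.sin_neg]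
  have hc' : Real.cos (-θ / 2) = Real.cos (θ / 2) := by rw [neg_div, Real.cos_neg]
  rw [Psi, (quot_bd (by rw [hs']; exact (neg_neg_of_pos hs).ne)).2, hs', hc',
    log_bd_neg (div_neg_of_pos_of_neg hc (neg_neg_of_pos hs)), Real.log_div hc.ne' (neg_neg_of_pos hs).ne,
    Real.log_neg_eq_log, yb]
  push_cast
  field_simp
  ring_nf
  simp only [Complex.I_sq]
  ring

theorem slit_I {x : ℝ} (hx : x ≠ 0) : (x : ℂ) * Complex.I ∈ Complex.slitPlane := by
  rw [Complex.mem_slitPlane_iff]; right; simpa using hx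

theorem strip {f : ℝ → ℝ} {w : ℂ → ℝ} (hf : ContDiff ℝ 2 f) (hf2 : ∀ x, 0 ≤ deriv (deriv f) x) {t0 : ℝ}
    (hw : ∀ p : ℂ, t0 < p.re → IsLoc f w p) (hw0 : ∀ p, 0 ≤ w p) (hw1 : ∀ p, w p ≤ 1) {Y : ℝ} (hYp : 0 ≤ Y)
    (hY : ∀ p : ℂ, p.im ∉ Ioo (-Y) Y → w p = 0) {t δ y0 Bm Bp : ℝ} (hδ : 0 < δ) (ht : t0 < t - δ)
    (hBm : 0 < Bm) (hBp : 0 < Bp) (hAm : A0 w Y (t - δ) ≤ Bm) (hAp : A0 w Y (t + δ) ≤ Bp) :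
    2 * Real.pi * w (t + y0 * Complex.I) ≤ Real.sqrt (Real.pi * Bm / δ) + Real.sqrt (Real.pi * Bp / δ) := by
  have hpi := Real.pi_pos
  set z0 : ℂ := t + y0 * Complex.I with hz0
  have hz0re : z0.re = t := by simp [hz0]
  set c : ℝ := 2 * δ / Real.pi with hc
  have hcpos : 0 < c := by positivity
  have hnorm : ∀ p : ℂ, p.re < 0 → ‖Complex.exp p‖ < 1 := fun p hp => by
    rw [Complex.norm_exp]; exact by simpa using hp
  have h1ne : ∀ ζ : ℂ, ‖ζ‖ < 1 → 1 - ζ ≠ 0 := fun ζ h h0 => by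
    rw [← sub_eq_zero.1 h0] at h; simp at h
  have hPre : ∀ ζ : ℂ, ‖ζ‖ < 1 → t0 < (Psi z0 c ζ).re := by
    intro ζ h
    rw [Psi_re, hz0re]
    have := (abs_lt.1 (Complex.abs_arg_lt_pi_div_two_iff.2 (Or.inl (quot_re_pos h)))).1
    have h3 : c * (-(Real.pi / 2)) < c * ((1 + ζ) / (1 - ζ)).arg := by gcongr
    have h4 : c * (-(Real.pi / 2)) = - δ := by rw [hc]; field_simp
    linarith
  have hPan : ∀ ζ : ℂ, ‖ζ‖ < 1 → AnalyticAt ℂ (Psi z0 c) ζ := fun ζ h =>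
    Psi_analytic (h1ne ζ h) (Complex.mem_slitPlane_iff.2 (Or.inl (quot_re_pos h)))
  set V : ℂ → ℝ := fun p => w (Psi z0 c (Complex.exp p)) with hVdef
  have hV : ∀ p : ℂ, p.re < 0 → IsLoc f V p := by
    intro p hp
    have h1 := hnorm p hp
    exact IsLoc.comp (Ψ := fun p => Psi z0 c (Complex.exp p)) (hw _ (hPre _ h1))
      (AnalyticAt.comp (g := Psi z0 c) (hPan _ h1) (by fun_prop))
  have hper : ∀ p, V (p + 2 * Real.pi * Complex.I) = V p := by
    intro p; simp only [hVdef]; rw [Complex.exp_periodic]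
  have hmono := G_mono hf hf2 hV hper (M := 1) (fun p => hw1 _)
  set G : ℝ → ℝ := fun l : ℝ => ∫ θ in (-Real.pi)..Real.pi, V (l + θ * Complex.I) with hG
  have hVc : ∀ l : ℝ, l < 0 → Continuous fun θ : ℝ => V (l + θ * Complex.I) := fun l hl =>
    slice_cont (S := Iio 0) (fun p hp => ((hV p hp).contDiffAt hf).continuousAt) hl
  have wcont : ∀ p : ℂ, t0 < p.re → ContinuousAt w p := fun p hp => ((hw p hp).contDiffAt hf).continuousAt
  -- lower bound
  have hlow : ∀ l < 0, 2 * Real.pi * w z0 ≤ G l := by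
    intro l hl
    have hP0 : Psi z0 c 0 = z0 := by simp [Psi]
    have hca : ContinuousAt (fun ζ => w (Psi z0 c ζ)) 0 := by
      apply ContinuousAt.comp (g := w) (f := Psi z0 c)
      · exact wcont _ (hPre 0 (by simp))
      · exact (hPan 0 (by simp)).continuousAt
    refine le_of_forall_pos_sub_le fun ε hε => ?_
    have hev : ∀ᶠ ζ in 𝓝 (0:ℂ), w z0 - ε / (2 * Real.pi) < w (Psi z0 c ζ) := by
      apply hca.eventually_const_lt
      change _ < w (Psi z0 c 0)
      rw [hP0]
      have : 0 < ε / (2 * Real.pi) := by positivity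
      linarith
    obtain ⟨η, hη, hball⟩ := Metric.eventually_nhds_iff.1 hev
    set m := min l (Real.log (η / 2)) with hm
    have hml : m ≤ l := min_le_left _ _
    have hGm : G m ≤ G l := hmono (show m ∈ Iio (0:ℝ) from lt_of_le_of_lt hml hl) hl hml
    refine le_trans ?_ hGm
    have : ∫ θ in (-Real.pi)..Real.pi, (w z0 - ε / (2 * Real.pi)) ≤ G m := by
      apply intervalIntegral.integral_mono_on (by linarith) (by simp)
        ((hVc m (lt_of_le_of_lt hml hl)).intervalIntegrable _ _)
      intro θ _
      apply le_of_lt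
      apply hball
      rw [dist_zero_right, Complex.norm_exp]
      simp only [Complex.add_re, Complex.ofReal_re, Complex.mul_re, Complex.I_re, Complex.ofReal_im, Complex.I_im,
        mul_zero, zero_mul, sub_zero, add_zero]
      calc Real.exp m ≤ Real.exp (Real.log (η / 2)) := Real.exp_le_exp.2 (min_le_right _ _)
        _ = η / 2 := Real.exp_log (by positivity)
        _ < η := by linarith
    rw [intervalIntegral.integral_const, smul_eq_mul] at this
    refine le_trans (le_of_eq ?_) this
    field_simp
    ring
  -- split
  have hsplit : ∀ l < 0, G l = (∫ θ in (0:ℝ)..Real.pi, V (l + (-θ : ℝ) * Complex.I)) +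
      ∫ θ in (0:ℝ)..Real.pi, V (l + θ * Complex.I) := by
    intro l hl
    have := intervalIntegral.integral_comp_neg (a := 0) (b := Real.pi) (fun θ : ℝ => V (l + θ * Complex.I))
    rw [this, neg_zero, hG]
    exact (intervalIntegral.integral_add_adjacent_intervals ((hVc l hl).intervalIntegrable _ _)
      ((hVc l hl).intervalIntegrable _ _)).symm
  -- limits
  have hpt : ∀ θ : ℝ, Real.sin (θ / 2) ≠ 0 → Real.cos (θ / 2) ≠ 0 →
      t0 < (Psi z0 c (Complex.exp (θ * Complex.I))).re →
      Tendsto (fun l : ℝ => V (l + θ * Complex.I)) (𝓝[<] 0) (𝓝 (w (Psi z0 c (Complex.exp (θ * Complex.I))))) := by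
    intro θ hs hcs hre
    have hq := quot_bd hs
    have a1 : ContinuousAt (Psi z0 c) (Complex.exp (θ * Complex.I)) :=
      (Psi_analytic hq.1 (by rw [hq.2]; exact slit_I (div_ne_zero hcs hs))).continuousAt
    have a2 : ContinuousAt (fun ζ => w (Psi z0 c ζ)) (Complex.exp (θ * Complex.I)) :=
      ContinuousAt.comp (g := w) (wcont _ hre) a1
    have a3 : Tendsto (fun l : ℝ => Complex.exp (l + θ * Complex.I)) (𝓝[<] 0) (𝓝 (Complex.exp (θ * Complex.I))) := by
      apply Tendsto.mono_left _ nhdsWithin_le_nhds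
      apply Continuous.tendsto'
      · fun_prop
      · simp
    exact a2.tendsto.comp a3
  have hlimp : Tendsto (fun l : ℝ => ∫ θ in (0:ℝ)..Real.pi, V (l + θ * Complex.I)) (𝓝[<] 0)
      (𝓝 (∫ θ in (0:ℝ)..Real.pi, w ((t + δ : ℝ) + (yb y0 c θ : ℝ) * Complex.I))) := by
    apply intervalIntegral.tendsto_integral_filter_of_dominated_convergence (fun _ => 1)
    · filter_upwards [self_mem_nhdsWithin] with l hl
      exact (hVc l hl).aestronglyMeasurable
    · refine Eventually.of_forall fun l => Eventually.of_forall fun θ _ => ?_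
      rw [Real.norm_of_nonneg (hw0 _)]; exact hw1 _
    · exact intervalIntegrable_const
    · have : ∀ᵐ θ : ℝ, θ ≠ Real.pi := by
        simp [MeasureTheory.ae_iff]
      filter_upwards [this] with θ hθne hθ
      rw [uIoc_of_le hpi.le] at hθ
      have hθ' : θ ∈ Ioo 0 Real.pi := ⟨hθ.1, lt_of_le_of_ne hθ.2 hθne⟩
      have hs : 0 < Real.sin (θ / 2) := Real.sin_pos_of_pos_of_lt_pi (by linarith [hθ'.1]) (by linarith [hθ'.2, hθ'.1])
      have hcs : 0 < Real.cos (θ / 2) := Real.cos_pos_of_mem_Ioo ⟨by linarith [hθ'.1, Real.pi_pos], by linarith [hθ'.2]⟩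
      have e := Psi_bd_pos (t := t) (y0 := y0) (δ := δ) hθ'
      rw [← e]
      apply hpt θ hs.ne' hcs.ne'
      rw [e]; simp; linarith
  have hlimm : Tendsto (fun l : ℝ => ∫ θ in (0:ℝ)..Real.pi, V (l + (-θ : ℝ) * Complex.I)) (𝓝[<] 0)
      (𝓝 (∫ θ in (0:ℝ)..Real.pi, w ((t - δ : ℝ) + (yb y0 c θ : ℝ) * Complex.I))) := by
    apply intervalIntegral.tendsto_integral_filter_of_dominated_convergence (fun _ => 1)
    · filter_upwards [self_mem_nhdsWithin] with l hl
      exact ((hVc l hl).comp continuous_neg).aestronglyMeasurable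
    · refine Eventually.of_forall fun l => Eventually.of_forall fun θ _ => ?_
      rw [Real.norm_of_nonneg (hw0 _)]; exact hw1 _
    · exact intervalIntegrable_const
    · have : ∀ᵐ θ : ℝ, θ ≠ Real.pi := by
        simp [MeasureTheory.ae_iff]
      filter_upwards [this] with θ hθne hθ
      rw [uIoc_of_le hpi.le] at hθ
      have hθ' : θ ∈ Ioo 0 Real.pi := ⟨hθ.1, lt_of_le_of_ne hθ.2 hθne⟩
      have hs : 0 < Real.sin (θ / 2) := Real.sin_pos_of_pos_of_lt_pi (by linarith [hθ'.1]) (by linarith [hθ'.2, hθ'.1])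
      have hcs : 0 < Real.cos (θ / 2) := Real.cos_pos_of_mem_Ioo ⟨by linarith [hθ'.1, Real.pi_pos], by linarith [hθ'.2]⟩
      have e := Psi_bd_neg (t := t) (y0 := y0) (δ := δ) hθ'
      rw [← e]
      apply hpt (-θ)
      · rw [neg_div, Real.sin_neg]; exact (neg_neg_of_pos hs).ne
      · rw [neg_div, Real.cos_neg]; exact hcs.ne'
      rw [e]; simp; linarith
  have hfin : 2 * Real.pi * w z0 ≤ (∫ θ in (0:ℝ)..Real.pi, w ((t - δ : ℝ) + (yb y0 c θ : ℝ) * Complex.I)) +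
      ∫ θ in (0:ℝ)..Real.pi, w ((t + δ : ℝ) + (yb y0 c θ : ℝ) * Complex.I) := by
    refine ge_of_tendsto (hlimm.add hlimp) ?_
    filter_upwards [self_mem_nhdsWithin] with l hl
    rw [← hsplit l hl]
    exact hlow l hl
  have b1 := cov (g := fun y : ℝ => w ((t - δ : ℝ) + y * Complex.I)) (y0 := y0) (Y := Y)
    (slice_cont (S := Ioi t0) (fun p hp => wcont p hp) ht) (fun y => hw0 _)
    (fun y hy => hY _ (by simpa using hy)) hδ hBm hYp hAm
  have b2 := cov (g := fun y : ℝ => w ((t + δ : ℝ) + y * Complex.I)) (y0 := y0) (Y := Y)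
    (slice_cont (S := Ioi t0) (fun p hp => wcont p hp) (show t0 < t + δ by linarith)) (fun y => hw0 _)
    (fun y hy => hY _ (by simpa using hy)) hδ hBp hYp hAp
  exact hfin.trans (add_le_add b1 b2)


noncomputable def tau (lam : ℝ → ℝ) (t1 t : ℝ) : ℝ := ∫ s in t1..t, lam s
noncomputable def EE (lam : ℝ → ℝ) (t1 T t : ℝ) : ℝ :=
  (∫ s in t..T, Real.exp (-2 * tau lam t1 s)) + Real.exp (-2 * tau lam t1 T)

theorem mono_of_hd {F F' : ℝ → ℝ} {a b : ℝ} (hab : a ≤ b) (hd : ∀ x ∈ Icc a b, HasDerivAt F (F' x) x)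
    (h : ∀ x ∈ Icc a b, 0 ≤ F' x) : F a ≤ F b := by
  have : MonotoneOn F (Icc a b) := by
    apply monotoneOn_of_deriv_nonneg (convex_Icc a b)
    · exact fun x hx => (hd x hx).continuousAt.continuousWithinAt
    · intro x hx; exact (hd x (interior_subset hx)).differentiableAt.differentiableWithinAt
    · intro x hx; rw [(hd x (interior_subset hx)).deriv]; exact h x (interior_subset hx)
  exact this (left_mem_Icc.2 hab) (right_mem_Icc.2 hab) hab

theorem tau_deriv {lam : ℝ → ℝ} (hlam : Continuous lam) (t1 : ℝ) (t : ℝ) : HasDerivAt (tau lam t1) (lam t) t :=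
  intervalIntegral.integral_hasDerivAt_right (hlam.intervalIntegrable _ _)
    (hlam.stronglyMeasurableAtFilter _ _) hlam.continuousAt

theorem tau_cont {lam : ℝ → ℝ} (hlam : Continuous lam) (t1 : ℝ) : Continuous (tau lam t1) :=
  continuous_iff_continuousAt.2 fun t => (tau_deriv hlam t1 t).continuousAt

theorem etau_deriv {lam : ℝ → ℝ} (hlam : Continuous lam) (t1 : ℝ) (t : ℝ) : HasDerivAt (fun t => Real.exp (-2 * tau lam t1 t))
    (-2 * lam t * Real.exp (-2 * tau lam t1 t)) t := by
  have := ((tau_deriv hlam t1 t).const_mul (-2)).exp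
  refine this.congr_deriv (by ring)

theorem EE_deriv {lam : ℝ → ℝ} (hlam : Continuous lam) (t1 T : ℝ) (t : ℝ) : HasDerivAt (EE lam t1 T) (- Real.exp (-2 * tau lam t1 t)) t := by
  have hc : Continuous fun s => Real.exp (-2 * tau lam t1 s) := by
    have := tau_cont hlam t1
    fun_prop
  exact (intervalIntegral.integral_hasDerivAt_left (hc.intervalIntegrable _ _)
    (hc.stronglyMeasurableAtFilter _ _) hc.continuousAt).add_const _

theorem EE_le {lam : ℝ → ℝ} (hlam : Continuous lam) (t1 T : ℝ) {H H' : ℝ → ℝ} {t T' : ℝ} (ht : t ≤ T') (hT : EE lam t1 T T' ≤ H T')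
    (hd : ∀ x ∈ Icc t T', HasDerivAt H (H' x) x)
    (h : ∀ x ∈ Icc t T', H' x ≤ - Real.exp (-2 * tau lam t1 x)) : EE lam t1 T t ≤ H t := by
  have := mono_of_hd ht (fun x hx => (EE_deriv hlam t1 T x).sub (hd x hx)) (fun x hx => by linarith [h x hx])
  simp only [Pi.sub_apply] at this
  linarith

theorem EE_ge {lam : ℝ → ℝ} (hlam : Continuous lam) (t1 T : ℝ) {H H' : ℝ → ℝ} {t T' : ℝ} (ht : t ≤ T') (hT : H T' ≤ EE lam t1 T T')
    (hd : ∀ x ∈ Icc t T', HasDerivAt H (H' x) x)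
    (h : ∀ x ∈ Icc t T', - Real.exp (-2 * tau lam t1 x) ≤ H' x) : H t ≤ EE lam t1 T t := by
  have := mono_of_hd ht (fun x hx => (hd x hx).sub (EE_deriv hlam t1 T x)) (fun x hx => by linarith [h x hx])
  simp only [Pi.sub_apply] at this
  linarith

theorem EE_T {lam : ℝ → ℝ} (_hlam : Continuous lam) (t1 T : ℝ) : EE lam t1 T T = Real.exp (-2 * tau lam t1 T) := by simp [EE]

theorem EE_le_exp {lam : ℝ → ℝ} (hlam : Continuous lam) (t1 T : ℝ) (hl : ∀ t, 1 / 2 ≤ lam t) {t : ℝ} (ht : t ≤ T) :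
    EE lam t1 T t ≤ Real.exp (-2 * tau lam t1 t) := by
  refine EE_le hlam t1 T (H := fun t => Real.exp (-2 * tau lam t1 t)) ht (EE_T hlam t1 T).le
    (fun x _ => etau_deriv hlam t1 x) fun x _ => ?_
  nlinarith [hl x, Real.exp_pos (-2 * tau lam t1 x)]

theorem ode {lam : ℝ → ℝ} (hlam : Continuous lam) (t1 T : ℝ) {A A1 A2 : ℝ → ℝ} (hA : ∀ t ∈ Icc t1 T, HasDerivAt A (A1 t) t)
    (hA1 : ∀ t ∈ Icc t1 T, HasDerivAt A1 (A2 t) t)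
    (hin : ∀ t ∈ Icc t1 T, 0 ≤ A2 t + 2 * lam t * A1 t)
    (h1 : A t1 ≤ 2 * Real.pi * EE lam t1 T t1) (h2 : A T ≤ 2 * Real.pi * EE lam t1 T T) {t : ℝ}
    (ht : t ∈ Icc t1 T) : A t ≤ 2 * Real.pi * EE lam t1 T t := by
  by_contra hcon
  push Not at hcon
  set P : ℝ → ℝ := fun t => A t - 2 * Real.pi * EE lam t1 T t with hP
  set P' : ℝ → ℝ := fun t => A1 t + 2 * Real.pi * Real.exp (-2 * tau lam t1 t) with hP'
  have dP : ∀ x ∈ Icc t1 T, HasDerivAt P (P' x) x := fun x hx =>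
    ((hA x hx).sub ((EE_deriv hlam t1 T x).const_mul (2 * Real.pi))).congr_deriv (by simp only [hP']; ring)
  have hlt1 : t1 < t := by
    rcases ht.1.lt_or_eq with h | h
    · exact h
    · rw [← h] at hcon; linarith
  have hlt2 : t < T := by
    rcases ht.2.lt_or_eq with h | h
    · exact h
    · rw [h] at hcon; linarith
  obtain ⟨x1, hx1, e1⟩ := exists_hasDerivAt_eq_slope P P' hlt1
    (fun x hx => (dP x ⟨hx.1, hx.2.trans ht.2⟩).continuousAt.continuousWithinAt)
    (fun x hx => dP x ⟨hx.1.le, hx.2.le.trans ht.2⟩)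
  obtain ⟨x2, hx2, e2⟩ := exists_hasDerivAt_eq_slope P P' hlt2
    (fun x hx => (dP x ⟨ht.1.trans hx.1, hx.2⟩).continuousAt.continuousWithinAt)
    (fun x hx => dP x ⟨ht.1.trans hx.1.le, hx.2.le⟩)
  have p1 : 0 < P' x1 := by
    rw [e1]; apply div_pos <;> (try simp only [hP]) <;> linarith
  have p2 : P' x2 < 0 := by
    rw [e2]; apply div_neg_of_neg_of_pos <;> (try simp only [hP]) <;> linarith
  have hm := mono_of_hd (F := fun x => A1 x * Real.exp (2 * tau lam t1 x))
    (F' := fun x => (A2 x + 2 * lam x * A1 x) * Real.exp (2 * tau lam t1 x)) (hx1.2.trans hx2.1).le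
    (fun x hx => by
      have hx' : x ∈ Icc t1 T := ⟨hx1.1.le.trans hx.1, hx.2.trans hx2.2.le⟩
      have := (hA1 x hx').mul ((tau_deriv hlam t1 x).const_mul 2).exp
      exact this.congr_deriv (by ring))
    (fun x hx => mul_nonneg (hin x ⟨hx1.1.le.trans hx.1, hx.2.trans hx2.2.le⟩) (Real.exp_pos _).le)
  have q : ∀ x, P' x * Real.exp (2 * tau lam t1 x) = A1 x * Real.exp (2 * tau lam t1 x) + 2 * Real.pi := by
    intro x
    simp only [hP']
    rw [add_mul, mul_assoc (2 * Real.pi), ← Real.exp_add]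
    simp
  have a1 := mul_pos p1 (Real.exp_pos (2 * tau lam t1 x1))
  have a2 := mul_neg_of_neg_of_pos p2 (Real.exp_pos (2 * tau lam t1 x2))
  rw [q] at a1 a2
  linarith


noncomputable def aa (α γ C : ℝ) (t : ℝ) : ℝ := α * (1 + C * Real.exp (γ * t))
noncomputable def ac (α γ C : ℝ) (t : ℝ) : ℝ := min (aa α γ C t) 2
noncomputable def la (α γ C : ℝ) (t : ℝ) : ℝ := 1 / ac α γ C t

section
variable {α γ C : ℝ} (hα : 0 < α) (hγ0 : 0 < γ) (hγ1 : γ ≤ 1) (hC : 0 < C)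

theorem aa_pos (hα : 0 < α) (hC : 0 < C) (t : ℝ) : 0 < aa α γ C t := by
  unfold aa; positivity

theorem ac_pos (hα : 0 < α) (hC : 0 < C) (t : ℝ) : 0 < ac α γ C t :=
  lt_min (aa_pos hα hC t) (by norm_num)

theorem aa_cont : Continuous (aa α γ C) := by unfold aa; fun_prop

theorem ac_cont : Continuous (ac α γ C) := aa_cont.min continuous_const

theorem la_cont (hα : 0 < α) (hC : 0 < C) : Continuous (la α γ C) :=
  continuous_const.div ac_cont fun t => (ac_pos hα hC t).ne'

theorem la_half (hα : 0 < α) (hC : 0 < C) (t : ℝ) : 1 / 2 ≤ la α γ C t :=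
  one_div_le_one_div_of_le (ac_pos hα hC t) (min_le_right _ _)

theorem aa_deriv (t : ℝ) : HasDerivAt (aa α γ C) (γ * (aa α γ C t - α)) t := by
  have h1 : HasDerivAt (fun t => γ * t) (γ * 1) t := (hasDerivAt_id t).const_mul γ
  have := ((h1.exp.const_mul C).const_add 1).const_mul α
  exact this.congr_deriv (by unfold aa; ring)

theorem aa_mono (hα : 0 < α) (hγ0 : 0 < γ) (hC : 0 < C) : Monotone (aa α γ C) := by
  intro s t h
  unfold aa
  gcongr

theorem ac_mono (hα : 0 < α) (hγ0 : 0 < γ) (hC : 0 < C) : Monotone (ac α γ C) := fun _ _ h =>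
  min_le_min_right _ (aa_mono hα hγ0 hC h)

theorem ac_exp (hα : 0 < α) (hγ1 : γ ≤ 1) (hC : 0 < C) {s t : ℝ} (h : s ≤ t) :
    ac α γ C t ≤ ac α γ C s * Real.exp (t - s) := by
  have he : 1 ≤ Real.exp (t - s) := Real.one_le_exp (by linarith)
  have h1 : aa α γ C t ≤ aa α γ C s * Real.exp (t - s) := by
    unfold aa
    have : Real.exp (γ * t) ≤ Real.exp (γ * s) * Real.exp (t - s) := by
      rw [← Real.exp_add]; apply Real.exp_le_exp.2; nlinarith
    have h3 : C * Real.exp (γ * t) ≤ C * (Real.exp (γ * s) * Real.exp (t - s)) := by gcongr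
    nlinarith
  unfold ac
  rcases min_cases (aa α γ C s) 2 with h2 | h2
  · rw [h2.1]; exact (min_le_left _ _).trans h1
  · rw [h2.1]; refine (min_le_right _ _).trans (by linarith)

theorem exp_aux {R : ℝ} (hR : 0 ≤ R) : (2 - R) * Real.exp R ≤ 2 + R := by
  have := mono_of_hd (F := fun R => 2 + R - (2 - R) * Real.exp R) (F' := fun R => 1 - ((-1) * Real.exp R + (2 - R) * Real.exp R)) hR
    (fun x _ => ((hasDerivAt_id x).const_add 2).sub (((hasDerivAt_id x).const_sub 2).mul (Real.hasDerivAt_exp x)))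
    (fun x _ => by
      have h1 := Real.add_one_le_exp (-x)
      have h2 : Real.exp (-x) * Real.exp x = 1 := by rw [← Real.exp_add]; simp
      nlinarith [Real.exp_pos x])
  simp at this
  linarith

theorem exp_aux2 (R : ℝ) : Real.exp R - 1 - R * Real.exp R ≤ 0 := by
  have h1 := Real.add_one_le_exp (-R)
  have h2 : Real.exp (-R) * Real.exp R = 1 := by rw [← Real.exp_add]; simp
  nlinarith [Real.exp_pos R]

/-- the bound on the left side of the strip -/
theorem num_minus (hα : 0 < α) (hγ0 : 0 < γ) (hγ1 : γ ≤ 1) (hC : 0 < C) (t1 t : ℝ) :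
    ac α γ C (t - ac α γ C t / 2) * Real.exp (-2 * tau (la α γ C) t1 (t - ac α γ C t / 2)) ≤
      ac α γ C t * Real.exp (-2 * tau (la α γ C) t1 t) * Real.exp 1 := by
  have hap := ac_pos (γ := γ) hα hC t
  set a := ac α γ C t with ha
  set δ := a / 2 with hδ
  have hδ0 : 0 < δ := by positivity
  have hδ1 : δ ≤ 1 := by have : a ≤ 2 := min_le_right _ _; linarith
  have hmp := ac_pos (γ := γ) hα hC (t - δ)
  set am := ac α γ C (t - δ) with ham
  have hama : am ≤ a := ac_mono hα hγ0 hC (by linarith)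
  have hae : a ≤ am * Real.exp δ := by
    have := ac_exp (C := C) hα hγ1 hC (show t - δ ≤ t by linarith)
    simpa using this
  set R := Real.log (a / am) with hR
  have hR0 : 0 ≤ R := Real.log_nonneg (by rw [le_div_iff₀ hmp]; linarith)
  have heR : Real.exp R = a / am := Real.exp_log (by positivity)
  have hRδ : R ≤ δ := by
    rw [← Real.exp_le_exp, heR, div_le_iff₀ hmp]; linarith
  have hlc := la_cont (γ := γ) hα hC
  set τ := tau (la α γ C) t1 with hτ
  have b1 : τ t + 1 / a ≤ τ (t - R) + Real.exp R / a := by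
    have := mono_of_hd (F := fun s => - (τ s + Real.exp (t - s) / a))
      (F' := fun s => - (la α γ C s + (Real.exp (t - s) * (-1)) / a)) (show t - R ≤ t by linarith)
      (fun s _ => by
        have h1 : HasDerivAt (fun s => t - s) (-1) s := (hasDerivAt_id s).const_sub t
        exact ((tau_deriv hlc t1 s).add (h1.exp.div_const a)).neg)
      (fun s hs => by
        have h1 := ac_exp (C := C) hα hγ1 hC hs.2
        have h2 := ac_pos (γ := γ) hα hC s
        have : la α γ C s ≤ Real.exp (t - s) / a := by
          unfold la
          rw [div_le_div_iff₀ h2 hap]; linarith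
        have e : (Real.exp (t - s) * (-1)) / a = - (Real.exp (t - s) / a) := by ring
        rw [e]; linarith)
    simp at this
    simp only [one_div]
    linarith
  have b2 : τ (t - R) - τ (t - δ) ≤ (δ - R) * (Real.exp R / a) := by
    have := mono_of_hd (F := fun s => s * (Real.exp R / a) - τ s)
      (F' := fun s => 1 * (Real.exp R / a) - la α γ C s) (show t - δ ≤ t - R by linarith)
      (fun s _ => ((hasDerivAt_id s).mul_const _).sub (tau_deriv hlc t1 s))
      (fun s hs => by
        have h1 : am ≤ ac α γ C s := ac_mono hα hγ0 hC hs.1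
        have : la α γ C s ≤ 1 / am := one_div_le_one_div_of_le hmp h1
        have e : Real.exp R / a = 1 / am := by rw [heR]; field_simp
        rw [e]; linarith)
    nlinarith
  have b3 : 2 * (τ t - τ (t - δ)) ≤ 1 + R := by
    have h1 : 2 * (τ t - τ (t - δ)) ≤ 2 * ((Real.exp R / a - 1 / a) + (δ - R) * (Real.exp R / a)) := by linarith
    have h2 : 2 * ((Real.exp R / a - 1 / a) + (δ - R) * (Real.exp R / a)) =
        (1 / δ) * (Real.exp R - 1 - R * Real.exp R) + Real.exp R := by
      rw [hδ]; field_simp; ring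
    have h3 : 1 ≤ 1 / δ := by rw [le_div_iff₀ hδ0]; linarith
    have h4 := exp_aux2 R
    have h5 := exp_aux hR0
    nlinarith
  have hm : am = a * Real.exp (-R) := by rw [Real.exp_neg, heR]; field_simp
  rw [hm, mul_assoc, mul_assoc, ← Real.exp_add, ← Real.exp_add]
  refine mul_le_mul_of_nonneg_left (Real.exp_le_exp.2 ?_) hap.le
  linarith

theorem EE_le_ac (hα : 0 < α) (hγ0 : 0 < γ) (hγ1 : γ ≤ 1) (hC : 0 < C) (t1 T t : ℝ) (ht : t ≤ T)
    (hT : 2 ≤ aa α γ C T) :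
    EE (la α γ C) t1 T t ≤ ac α γ C t * Real.exp (-2 * tau (la α γ C) t1 t) := by
  have hlc := la_cont (γ := γ) hα hC
  have hle := fun {t : ℝ} (h : t ≤ T) => EE_le_exp hlc t1 T (la_half hα hC) h
  by_cases h1 : 1 ≤ ac α γ C t
  · refine (hle ht).trans ?_
    have := Real.exp_pos (-2 * tau (la α γ C) t1 t)
    nlinarith
  · push Not at h1
    have haa : ac α γ C t = aa α γ C t := by
      unfold ac at *; rw [min_eq_left]
      by_contra h; push Not at h; rw [min_eq_right h.le] at h1; linarith
    rw [haa] at h1 ⊢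
    obtain ⟨ts, hts, hts1⟩ := intermediate_value_Icc ht (aa_cont (α := α) (γ := γ) (C := C)).continuousOn
      (show (1:ℝ) ∈ Icc _ _ from ⟨h1.le, by linarith⟩)
    refine EE_le hlc t1 T (H := fun t => aa α γ C t * Real.exp (-2 * tau (la α γ C) t1 t)) (T' := ts) hts.1 ?_
      (fun x _ => (aa_deriv x).mul (etau_deriv hlc t1 x)) ?_
    · simp only [hts1, one_mul]; exact hle hts.2
    · intro x hx
      have hx1 : aa α γ C x ≤ 1 := by rw [← hts1]; exact aa_mono hα hγ0 hC hx.2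
      have hp := aa_pos (γ := γ) hα hC x
      have e : aa α γ C x * la α γ C x = 1 := by
        unfold la ac; rw [min_eq_left (by linarith)]; field_simp
      have hE := Real.exp_pos (-2 * tau (la α γ C) t1 x)
      have h3 : γ * (aa α γ C x - α) ≤ 1 := by nlinarith
      set E := Real.exp (-2 * tau (la α γ C) t1 x)
      have : aa α γ C x * (-2 * la α γ C x * E) = -2 * E := by
        linear_combination (-2 * E) * e
      rw [this]
      nlinarith

theorem num_plus (hα : 0 < α) (hγ0 : 0 < γ) (hγ1 : γ ≤ 1) (hC : 0 < C) (t1 T t : ℝ) (ht : t + ac α γ C t / 2 ≤ T)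
    (hT : 2 ≤ aa α γ C T) :
    EE (la α γ C) t1 T (t + ac α γ C t / 2) ≤
      ac α γ C t * Real.exp (-2 * tau (la α γ C) t1 t) * Real.exp (-1/4) := by
  have hap := ac_pos (γ := γ) hα hC t
  have hlc := la_cont (γ := γ) hα hC
  have E1 := EE_le_ac hα hγ0 hγ1 hC t1 T _ ht hT
  have E2 := EE_le_exp hlc t1 T (la_half hα hC) ht
  set a := ac α γ C t with ha
  set δ := a / 2 with hδ
  have hδ0 : 0 < δ := by positivity
  set τ := tau (la α γ C) t1 with hτ
  by_cases h1 : a ≤ 1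
  · refine E1.trans ?_
    have h2 : ac α γ C (t + δ) ≤ a * Real.exp δ := by
      have := ac_exp (C := C) hα hγ1 hC (show t ≤ t + δ by linarith)
      simpa using this
    have h3 : 1 - δ / 2 ≤ 2 * (τ (t + δ) - τ t) := by
      have := mono_of_hd (F := fun s => τ s - 1 / a * ((s - t) - (s - t) ^ 2 / 2))
        (F' := fun s => la α γ C s - 1 / a * (1 - (2 * (s - t) ^ 1 * 1) / 2)) (show t ≤ t + δ by linarith)
        (fun s _ => by
          have h1 : HasDerivAt (fun s => s - t) 1 s := (hasDerivAt_id s).sub_const t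
          refine ((tau_deriv hlc t1 s).sub ((h1.sub ((h1.pow 2).div_const 2)).const_mul (1 / a))).congr_deriv ?_
          norm_num)
        (fun s hs => by
          have h1 := ac_exp (C := C) hα hγ1 hC hs.1
          have h2 := ac_pos (γ := γ) hα hC s
          have h4 := Real.add_one_le_exp (-(s - t))
          have h5 : Real.exp (-(s - t)) * Real.exp (s - t) = 1 := by rw [← Real.exp_add]; simp
          have : Real.exp (-(s - t)) / a ≤ la α γ C s := by
            unfold la
            rw [div_le_div_iff₀ hap h2]
            nlinarith [Real.exp_pos (-(s - t))]
          have h6 : 1 / a * (-(s - t) + 1) ≤ 1 / a * Real.exp (-(s - t)) := by gcongr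
          have e : 1 / a * Real.exp (-(s - t)) = Real.exp (-(s - t)) / a := by ring
          rw [e] at h6
          have e2 : 1 / a * (1 - (2 * (s - t) ^ 1 * 1) / 2) = 1 / a * (-(s - t) + 1) := by ring
          rw [e2]
          linarith)
      simp at this
      have e : a⁻¹ * (δ - δ ^ 2 / 2) = (1 - δ / 2) / 2 := by rw [hδ]; field_simp
      rw [e] at this
      linarith
    calc ac α γ C (t + δ) * Real.exp (-2 * τ (t + δ)) ≤ (a * Real.exp δ) * Real.exp (-2 * τ (t + δ)) := by gcongr
      _ ≤ _ := by
        rw [mul_assoc, mul_assoc, ← Real.exp_add, ← Real.exp_add]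
        refine mul_le_mul_of_nonneg_left (Real.exp_le_exp.2 ?_) hap.le
        linarith
  · push Not at h1
    refine E2.trans ?_
    have h3 : δ ≤ 2 * (τ (t + δ) - τ t) := by
      have := mono_of_hd (F := fun s => τ s - s * (1 / 2))
        (F' := fun s => la α γ C s - 1 * (1 / 2)) (show t ≤ t + δ by linarith)
        (fun s _ => (tau_deriv hlc t1 s).sub ((hasDerivAt_id s).mul_const _))
        (fun s _ => by linarith [la_half (γ := γ) hα hC s])
      linarith
    rw [mul_assoc, ← Real.exp_add]
    calc Real.exp (-2 * τ (t + δ)) ≤ 1 * Real.exp (-2 * τ t + -1 / 4) := by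
          rw [one_mul]; apply Real.exp_le_exp.2; linarith
      _ ≤ _ := by gcongr

theorem EE_t1 (hα : 0 < α) (hγ0 : 0 < γ) (hC : 0 < C) {t1 T : ℝ} (ht : t1 ≤ T) :
    ac α γ C t1 / 2 ≤ EE (la α γ C) t1 T t1 := by
  have hlc := la_cont (γ := γ) hα hC
  have := EE_ge hlc t1 T (H := fun t => ac α γ C t1 / 2 * Real.exp (-2 * tau (la α γ C) t1 t)) ht ?_
    (fun x _ => (etau_deriv hlc t1 x).const_mul _) ?_
  · simpa [tau] using this
  · rw [EE_T hlc]
    have h2 : ac α γ C t1 ≤ 2 := min_le_right _ _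
    nlinarith [Real.exp_pos (-2 * tau (la α γ C) t1 T)]
  · intro x hx
    have h1 := ac_mono (C := C) hα hγ0 hC hx.1
    have h2 := ac_pos (γ := γ) hα hC x
    have h3 : ac α γ C t1 * la α γ C x ≤ 1 := by
      unfold la; rw [mul_one_div, div_le_one h2]; exact h1
    nlinarith [Real.exp_pos (-2 * tau (la α γ C) t1 x)]

noncomputable def QQ (α γ C t1 t : ℝ) : ℝ :=
  Real.exp (-(t - t1) / α + 1 / (α * γ) * Real.log (1 + C * Real.exp (γ * t)))

theorem tau_lower (hα : 0 < α) (hγ0 : 0 < γ) (hC : 0 < C) {t1 t : ℝ} (ht : t1 ≤ t) :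
    Real.exp (- tau (la α γ C) t1 t) ≤ QQ α γ C t1 t := by
  have hlc := la_cont (γ := γ) hα hC
  have := mono_of_hd (F := fun s => tau (la α γ C) t1 s - (s / α - 1 / (α * γ) * Real.log (1 + C * Real.exp (γ * s))))
    (F' := fun s => la α γ C s - (1 / α - 1 / (α * γ) * (C * (Real.exp (γ * s) * (γ * 1)) / (1 + C * Real.exp (γ * s))))) ht
    (fun s _ => by
      have h1 : HasDerivAt (fun t => γ * t) (γ * 1) s := (hasDerivAt_id s).const_mul γ
      have h2 := ((h1.exp.const_mul C).const_add 1).log (by positivity)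
      exact (tau_deriv hlc t1 s).sub (((hasDerivAt_id s).div_const α).sub (h2.const_mul _)))
    (fun s _ => by
      have h1 : 1 / aa α γ C s ≤ la α γ C s := one_div_le_one_div_of_le (ac_pos hα hC s) (min_le_left _ _)
      have h2 : 1 / α - 1 / (α * γ) * (C * (Real.exp (γ * s) * (γ * 1)) / (1 + C * Real.exp (γ * s))) = 1 / aa α γ C s := by
        unfold aa
        have : 0 < 1 + C * Real.exp (γ * s) := by positivity
        field_simp
        ring
      rw [h2]; linarith)
  have h0 : tau (la α γ C) t1 t1 = 0 := by simp [tau]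
  simp only [h0] at this
  have hl : 0 ≤ 1 / (α * γ) * Real.log (1 + C * Real.exp (γ * t1)) := by
    apply mul_nonneg (by positivity)
    apply Real.log_nonneg
    have : 0 < C * Real.exp (γ * t1) := by positivity
    linarith
  unfold QQ
  apply Real.exp_le_exp.2
  have e : -(t - t1) / α = t1 / α - t / α := by ring
  rw [e]
  linarith

theorem exp_half_le : Real.exp (1 / 2) ≤ 1.6488 := by
  have h : Real.exp (1 / 2) ^ 2 = Real.exp 1 := by rw [← Real.exp_nat_mul]; norm_num
  have := Real.exp_one_lt_d9
  nlinarith [Real.exp_pos (1 / 2)]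

theorem exp_eighth_le : Real.exp (-1 / 8) ≤ 0.883 := by
  have h : Real.exp (-1 / 8) ^ 8 = Real.exp (-1) := by rw [← Real.exp_nat_mul]; norm_num
  have h1 := Real.exp_one_gt_d9
  have h2 : Real.exp (-1) * Real.exp 1 = 1 := by rw [← Real.exp_add]; simp
  have h3 : Real.exp (-1) ≤ 0.3679 := by nlinarith [Real.exp_pos (-1)]
  by_contra hc
  push Not at hc
  have := pow_lt_pow_left₀ hc (by norm_num) (by norm_num : 8 ≠ 0)
  rw [h] at this
  norm_num at this
  linarith

theorem const_le : Real.exp (1 / 2) + Real.exp (-1 / 8) ≤ 8 / Real.pi := by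
  rw [le_div_iff₀ Real.pi_pos]
  have h := Real.pi_lt_d4
  have := exp_half_le
  have := exp_eighth_le
  nlinarith [Real.pi_pos]

theorem triv_case (hα : 0 < α) (hγ0 : 0 < γ) (hγ1 : γ ≤ 1) (hC : 0 < C) {t1 t : ℝ} (ht : t1 ≤ t)
    (hd : t - t1 ≤ ac α γ C t / 2) : 1 ≤ 8 / Real.pi * QQ α γ C t1 t := by
  set y := 1 + C * Real.exp (γ * t) with hy
  have hy1 : 1 < y := by have : 0 < C * Real.exp (γ * t) := by positivity
                         linarith
  set d := t - t1 with hdd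
  have hd0 : 0 ≤ d := by linarith
  have hd1 : d ≤ 1 := by have : ac α γ C t ≤ 2 := min_le_right _ _
                         linarith
  have hda : d ≤ α * y / 2 := by have : ac α γ C t ≤ aa α γ C t := min_le_left _ _
                                 unfold aa at this; linarith
  have hl := Real.one_sub_inv_le_log_of_pos (show 0 < y by linarith)
  have hl0 : 0 ≤ Real.log y := Real.log_nonneg hy1.le
  have hl2 : Real.log y ≤ Real.log y / γ := by rw [le_div_iff₀ hγ0]; nlinarith
  have hi : 0 ≤ 1 - y⁻¹ := by
    have := inv_le_one_of_one_le₀ hy1.le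
    linarith
  have h3 : d - d * y⁻¹ ≤ Real.log y / γ := by nlinarith
  have h4 : d * y⁻¹ ≤ α / 2 := by
    rw [← div_eq_mul_inv, div_le_iff₀ (by linarith)]; linarith
  have h5 : -(1/2) ≤ -d / α + 1 / (α * γ) * Real.log y := by
    have e : -d / α + 1 / (α * γ) * Real.log y = (-d + Real.log y / γ) / α := by field_simp
    rw [e, le_div_iff₀ hα]; linarith
  have h6 : Real.exp (-(1/2)) ≤ QQ α γ C t1 t := Real.exp_le_exp.2 h5
  have h7 : Real.exp (-(1/2)) * Real.exp (1/2) = 1 := by rw [← Real.exp_add]; simp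
  have h8 := const_le
  have h9 := Real.exp_pos (-1/8)
  calc 1 = Real.exp (1/2) * Real.exp (-(1/2)) := by rw [mul_comm, h7]
    _ ≤ 8 / Real.pi * QQ α γ C t1 t := by
      apply mul_le_mul _ h6 (Real.exp_pos _).le (by positivity)
      linarith
end


theorem A0_le {w : ℂ → ℝ} (hw0 : ∀ p, 0 ≤ w p) (hw1 : ∀ p, w p ≤ 1) {t P Q Y : ℝ}
    (hc : Continuous fun y : ℝ => w (t + y * Complex.I))
    (hPQ : P ≤ Q) (hg0 : ∀ y : ℝ, y ∉ Ioo P Q → w (t + y * Complex.I) = 0) (hYP : -Y ≤ P) (hQY : Q ≤ Y) :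
    A0 w Y t ≤ Q - P := by
  have i2 : ∀ a b, IntervalIntegrable (fun y : ℝ => w (t + y * Complex.I) ^ 2) MeasureTheory.volume a b := fun a b =>
    (hc.pow 2).intervalIntegrable _ _
  unfold A0
  rw [← intervalIntegral.integral_add_adjacent_intervals (i2 (-Y) P) (i2 P Y),
      ← intervalIntegral.integral_add_adjacent_intervals (i2 P Q) (i2 Q Y)]
  have z1 : ∫ y in (-Y)..P, w (t + y * Complex.I) ^ 2 = 0 := by
    rw [intervalIntegral.integral_congr (g := fun _ => (0:ℝ))]
    · simp
    intro y hy
    rw [uIcc_of_le hYP] at hy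
    simp [hg0 y (fun h => absurd h.1 (not_lt.2 hy.2))]
  have z2 : ∫ y in Q..Y, w (t + y * Complex.I) ^ 2 = 0 := by
    rw [intervalIntegral.integral_congr (g := fun _ => (0:ℝ))]
    · simp
    intro y hy
    rw [uIcc_of_le hQY] at hy
    simp [hg0 y (fun h => absurd h.2 (not_lt.2 hy.1))]
  have z3 : ∫ y in P..Q, w (t + y * Complex.I) ^ 2 ≤ ∫ y in P..Q, (1:ℝ) := by
    apply intervalIntegral.integral_mono_on hPQ (i2 _ _) (by simp)
    intro y _
    have := hw0 (t + y * Complex.I)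
    have := hw1 (t + y * Complex.I)
    nlinarith
  simp only [intervalIntegral.integral_const, smul_eq_mul, mul_one] at z3
  rw [z1, z2]; linarith

theorem main_w {α γ C : ℝ} (hα : 0 < α) (hγ0 : 0 < γ) (hγ1 : γ ≤ 1) (hC : 0 < C)
    {f : ℝ → ℝ} {w : ℂ → ℝ} (hf : ContDiff ℝ 2 f) (hf2 : ∀ x, 0 ≤ deriv (deriv f) x) {t0 : ℝ}
    (hw : ∀ p : ℂ, t0 < p.re → IsLoc f w p) (hw0 : ∀ p, 0 ≤ w p) (hw1 : ∀ p, w p ≤ 1) {Y : ℝ} (hYp : 0 ≤ Y)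
    (hY : ∀ p : ℂ, p.im ∉ Ioo (-Y) Y → w p = 0)
    {T0 : ℝ} (hT0 : ∀ p : ℂ, T0 ≤ p.re → w p = 0)
    (hsl : ∀ t, ∃ P Q, P ≤ Q ∧ Q - P ≤ Real.pi * ac α γ C t ∧ -Y ≤ P ∧ Q ≤ Y ∧
      ∀ y : ℝ, y ∉ Ioo P Q → w (t + y * Complex.I) = 0)
    {t1 t y0 : ℝ} (ht1 : t0 < t1) (ht : t1 ≤ t) :
    w (t + y0 * Complex.I) ≤ 8 / Real.pi * QQ α γ C t1 t := by
  have hpi := Real.pi_pos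
  by_cases htr : t - t1 ≤ ac α γ C t / 2
  · exact (hw1 _).trans (triv_case hα hγ0 hγ1 hC ht htr)
  push Not at htr
  have hlc := la_cont (γ := γ) hα hC
  have hap := ac_pos (γ := γ) hα hC t
  have ha2 : ac α γ C t ≤ 2 := min_le_right _ _
  obtain ⟨T, hT1, hT2, hT3⟩ : ∃ T, t + 1 ≤ T ∧ T0 ≤ T ∧ 2 ≤ aa α γ C T := by
    have : Tendsto (aa α γ C) atTop atTop := by
      unfold aa
      have h1 : Tendsto (fun t : ℝ => γ * t) atTop atTop := tendsto_id.const_mul_atTop hγ0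
      have h2 := (Real.tendsto_exp_atTop.comp h1).const_mul_atTop hC
      exact (tendsto_atTop_add_const_left _ 1 h2).const_mul_atTop hα
    exact ((eventually_ge_atTop (t + 1)).and ((eventually_ge_atTop T0).and (this.eventually_ge_atTop 2))).exists
  have hCD : ∀ p : ℂ, p.re ∈ Ioi t0 → ContDiffAt ℝ 2 w p := fun p hp => (hw p hp).contDiffAt hf
  have hcs : ∀ s, t0 < s → Continuous fun y : ℝ => w (s + y * Complex.I) := fun s hs =>
    slice_cont (S := Ioi t0) (fun p hp => (hCD p hp).continuousAt) hs
  have hin : ∀ s ∈ Icc t1 T, 0 ≤ A2 w Y s + 2 * la α γ C s * A1 w Y s := by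
    intro s hs
    obtain ⟨P, Q, h1, h2, h3, h4, h5⟩ := hsl s
    have := A_ineq (S := Ioi t0) hf hf2 hw hw0 (show s ∈ Ioi t0 from lt_of_lt_of_le ht1 hs.1) h1
      (ac_pos hα hC s) h2 h5 h3 h4
    have e : 2 * la α γ C s = 2 / ac α γ C s := by unfold la; ring
    rw [e]; exact this
  have hA1 : A0 w Y t1 ≤ 2 * Real.pi * EE (la α γ C) t1 T t1 := by
    obtain ⟨P, Q, h1, h2, h3, h4, h5⟩ := hsl t1
    have a1 := A0_le hw0 hw1 (hcs t1 ht1) h1 h5 h3 h4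
    have a2 := EE_t1 (γ := γ) hα hγ0 hC (show t1 ≤ T by linarith)
    nlinarith
  have hAT : A0 w Y T ≤ 2 * Real.pi * EE (la α γ C) t1 T T := by
    have : A0 w Y T = 0 := by
      unfold A0
      have : ∀ y : ℝ, w (T + y * Complex.I) = 0 := fun y => hT0 _ (by simpa using hT2)
      simp [this]
    rw [this, EE_T hlc]; positivity
  have hode : ∀ s ∈ Icc t1 T, A0 w Y s ≤ 2 * Real.pi * EE (la α γ C) t1 T s := fun s hs =>
    ode hlc t1 T (fun x hx => A0_deriv (S := Ioi t0) isOpen_Ioi hCD Y (lt_of_lt_of_le ht1 hx.1))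
      (fun x hx => A1_deriv (S := Ioi t0) isOpen_Ioi hCD Y (lt_of_lt_of_le ht1 hx.1)) hin hA1 hAT hs
  set a := ac α γ C t with ha
  set τ := tau (la α γ C) t1 t with hτ
  have hm : A0 w Y (t - a / 2) ≤ 2 * Real.pi * (a * Real.exp (-2 * τ) * Real.exp 1) := by
    refine (hode (t - a / 2) ⟨by linarith, by linarith⟩).trans ?_
    have h1 := EE_le_ac hα hγ0 hγ1 hC t1 T (t - a / 2) (by linarith) hT3
    have h2 := num_minus hα hγ0 hγ1 hC t1 t
    exact mul_le_mul_of_nonneg_left (h1.trans h2) (by positivity)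
  have hp : A0 w Y (t + a / 2) ≤ 2 * Real.pi * (a * Real.exp (-2 * τ) * Real.exp (-1/4)) := by
    refine (hode (t + a / 2) ⟨by linarith, by linarith⟩).trans ?_
    have h2 := num_plus hα hγ0 hγ1 hC t1 T t (by linarith) hT3
    exact mul_le_mul_of_nonneg_left h2 (by positivity)
  have hst := strip hf hf2 hw hw0 hw1 hYp hY (t := t) (δ := a / 2) (y0 := y0) (by positivity) (by linarith)
    (by positivity) (by positivity) hm hp
  have sq : ∀ k : ℝ, Real.sqrt (Real.pi * (2 * Real.pi * (a * Real.exp (-2 * τ) * Real.exp (2 * k))) / (a / 2)) =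
      2 * Real.pi * (Real.exp (-τ) * Real.exp k) := by
    intro k
    have e : Real.pi * (2 * Real.pi * (a * Real.exp (-2 * τ) * Real.exp (2 * k))) / (a / 2) =
        (2 * Real.pi * (Real.exp (-τ) * Real.exp k)) ^ 2 := by
      have e1 : Real.exp (-2 * τ) = Real.exp (-τ) ^ 2 := by rw [← Real.exp_nat_mul]; congr 1; push_cast; ring
      have e2 : Real.exp (2 * k) = Real.exp k ^ 2 := by rw [← Real.exp_nat_mul]; congr 1
      rw [e1, e2]; field_simp
    rw [e, Real.sqrt_sq (by positivity)]
  have s1 := sq (1 / 2)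
  have s2 := sq (-1 / 8)
  rw [show (2:ℝ) * (1 / 2) = 1 by norm_num] at s1
  rw [show (2:ℝ) * (-1 / 8) = -1/4 by norm_num] at s2
  rw [s1, s2] at hst
  have hfin : w (t + y0 * Complex.I) ≤ (Real.exp (1 / 2) + Real.exp (-1 / 8)) * Real.exp (-τ) := by
    have : 2 * Real.pi * w (t + y0 * Complex.I) ≤ 2 * Real.pi * ((Real.exp (1 / 2) + Real.exp (-1 / 8)) * Real.exp (-τ)) := by
      linarith
    exact le_of_mul_le_mul_left this (by positivity)
  refine hfin.trans ?_
  apply mul_le_mul const_le (tau_lower hα hγ0 hC ht) (Real.exp_pos _).le (by positivity)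


noncomputable def fe (ε x : ℝ) : ℝ := ∫ s in (0:ℝ)..x, Real.smoothTransition (s / ε - 1)

theorem st_contDiff (ε : ℝ) : ContDiff ℝ 1 (fun s : ℝ => Real.smoothTransition (s / ε - 1)) := by
  have h : ContDiff ℝ 1 Real.smoothTransition := Real.smoothTransition.contDiff
  exact h.comp ((contDiff_id.div_const ε).sub contDiff_const)

theorem fe_hd (ε x : ℝ) : HasDerivAt (fe ε) (Real.smoothTransition (x / ε - 1)) x := by
  have hc := (st_contDiff ε).continuous
  exact intervalIntegral.integral_hasDerivAt_right (hc.intervalIntegrable _ _)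
    (hc.stronglyMeasurableAtFilter _ _) hc.continuousAt

theorem fe_deriv (ε : ℝ) : deriv (fe ε) = fun s : ℝ => Real.smoothTransition (s / ε - 1) :=
  funext fun x => (fe_hd ε x).deriv

theorem fe_contDiff (ε : ℝ) : ContDiff ℝ 2 (fe ε) := by
  have := (contDiff_succ_iff_deriv (n := 1) (f := fe ε)).2
    ⟨fun x => (fe_hd ε x).differentiableAt, by simp, by rw [fe_deriv]; exact st_contDiff ε⟩
  simpa [one_add_one_eq_two] using this

theorem fe_convex {ε : ℝ} (hε : 0 < ε) (x : ℝ) : 0 ≤ deriv (deriv (fe ε)) x := by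
  rw [fe_deriv]
  apply Monotone.deriv_nonneg
  intro a b h
  apply Real.smoothTransition.monotone
  gcongr

theorem fe_zero {ε : ℝ} (hε : 0 < ε) {x : ℝ} (hx : x ≤ ε) : fe ε x = 0 := by
  unfold fe
  rw [intervalIntegral.integral_congr (g := fun _ => (0:ℝ))]
  · simp
  intro y hy
  apply Real.smoothTransition.zero_of_nonpos
  have : y ≤ ε := by
    have := hy.2
    exact this.trans (max_le hε.le hx)
  rw [sub_nonpos, div_le_one hε]; exact this

theorem fe_nonneg {ε : ℝ} (hε : 0 < ε) (x : ℝ) : 0 ≤ fe ε x := by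
  rcases le_total x 0 with h | h
  · rw [fe_zero hε (by linarith)]
  · exact intervalIntegral.integral_nonneg h fun y _ => Real.smoothTransition.nonneg _

theorem fe_le_one {ε : ℝ} (hε : 0 < ε) {x : ℝ} (hx : x ≤ 1) : fe ε x ≤ 1 := by
  rcases le_total x 0 with h | h
  · rw [fe_zero hε (by linarith)]; norm_num
  · have := mono_of_hd (F := fun x => x - fe ε x) h (fun y _ => (hasDerivAt_id y).sub (fe_hd ε y))
      (fun y _ => by linarith [Real.smoothTransition.le_one (y / ε - 1)])
    have h0 := fe_zero hε hε.le
    simp only [h0] at this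
    linarith

theorem fe_lower {ε : ℝ} (hε : 0 < ε) (x : ℝ) : x - 2 * ε ≤ fe ε x := by
  rcases le_total x (2 * ε) with h | h
  · linarith [fe_nonneg hε x]
  · have := mono_of_hd (F := fun x => fe ε x - x) h (fun y _ => (fe_hd ε y).sub (hasDerivAt_id y))
      (fun y hy => by
        rw [Real.smoothTransition.one_of_one_le]
        · simp
        · have : 2 ≤ y / ε := by rw [le_div_iff₀ hε]; exact hy.1
          linarith)
    have h0 := fe_nonneg hε (2 * ε)
    linarith


def DD (b : ℝ) (ψp ψm : ℝ → ℝ) : Set ℂ := {p | p.re < b ∧ ψp p.re < p.im ∧ p.im < ψm p.re}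

theorem DD_open {b : ℝ} {ψp ψm : ℝ → ℝ} (hp : Continuous ψp) (hm : Continuous ψm) :
    IsOpen (DD b ψp ψm) := by
  have h1 := isOpen_lt Complex.continuous_re (continuous_const (y := b))
  have h2 := isOpen_lt (hp.comp Complex.continuous_re) Complex.continuous_im
  have h3 := isOpen_lt Complex.continuous_im (hm.comp Complex.continuous_re)
  exact h1.inter (h2.inter h3)

theorem DD_closure {b : ℝ} {ψp ψm : ℝ → ℝ} (hp : Continuous ψp) (hm : Continuous ψm) {p : ℂ}
    (h : p ∈ closure (DD b ψp ψm)) : p.re ≤ b ∧ ψp p.re ≤ p.im ∧ p.im ≤ ψm p.re := by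
  have h1 := isClosed_le Complex.continuous_re (continuous_const (y := b))
  have h2 := isClosed_le (hp.comp Complex.continuous_re) Complex.continuous_im
  have h3 := isClosed_le Complex.continuous_im (hm.comp Complex.continuous_re)
  have hc := h1.inter (h2.inter h3)
  refine closure_minimal (s := DD b ψp ψm) ?_ hc h
  intro q hq
  exact ⟨hq.1.le, hq.2.1.le, hq.2.2.le⟩

theorem exp_DD {b : ℝ} {ψp ψm : ℝ → ℝ} {ρ₀ : ℝ} (hρ₀ : 0 < ρ₀) {φp φm : ℝ → ℝ} (hb : b = Real.log ρ₀)
    (hψp : ∀ t < b, ψp t = φp (Real.exp t)) (hψm : ∀ t < b, ψm t = φm (Real.exp t)) :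
    Complex.exp '' (DD b ψp ψm) = polarDomain ρ₀ φp φm := by
  ext z
  constructor
  · rintro ⟨p, ⟨h1, h2, h3⟩, rfl⟩
    refine ⟨Real.exp p.re, p.im, Real.exp_pos _, ?_, ?_, ?_, ?_⟩
    · rw [hb] at h1; exact (Real.lt_log_iff_exp_lt hρ₀).1 h1
    · rw [← hψp _ h1]; exact h2
    · rw [← hψm _ h1]; exact h3
    · rw [Complex.ofReal_exp, ← Complex.exp_add, Complex.re_add_im]
  · rintro ⟨r, θ, h0, h1, h2, h3, rfl⟩
    have hlt : Real.log r < b := by rw [hb]; exact Real.log_lt_log h0 h1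
    refine ⟨(Real.log r : ℂ) + θ * Complex.I, ⟨?_, ?_, ?_⟩, ?_⟩
    · simpa using hlt
    · simp only [Complex.add_re, Complex.ofReal_re, Complex.mul_re, Complex.I_re, mul_zero, Complex.ofReal_im,
        Complex.I_im, mul_one, sub_self, add_zero, Complex.add_im, Complex.mul_im, zero_add]
      rw [hψp _ hlt, Real.exp_log h0]; exact h2
    · simp only [Complex.add_re, Complex.ofReal_re, Complex.mul_re, Complex.I_re, mul_zero, Complex.ofReal_im,
        Complex.I_im, mul_one, sub_self, add_zero, Complex.add_im, Complex.mul_im, zero_add]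
      rw [hψm _ hlt, Real.exp_log h0]; exact h3
    · rw [Complex.exp_add, ← Complex.ofReal_exp, Real.exp_log h0]

theorem loc_in {u : ℂ → ℝ} {U : Set ℂ} (hU : IsOpen U) (hu : HarmonicOnSet u U) {z : ℂ} (hz : z ∈ U) :
    ∃ F : ℂ → ℂ, AnalyticAt ℂ F z ∧ u =ᶠ[𝓝 z] fun x => (F x).re := by
  obtain ⟨R, hR, hb⟩ := Metric.isOpen_iff.1 hU z hz
  have hh : InnerProductSpace.HarmonicOnNhd u (Metric.ball z R) := by
    intro x hx
    refine ⟨(hu.1 x (hb hx)).contDiffAt (hU.mem_nhds (hb hx)), ?_⟩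
    filter_upwards [hU.mem_nhds (hb hx)] with y hy
    rw [InnerProductSpace.laplacian_eq_iteratedFDeriv_complexPlane]
    exact hu.2 y hy
  obtain ⟨F, hF, hE⟩ := InnerProductSpace.HarmonicOnNhd.exists_analyticOnNhd_ball_re_eq hh
  refine ⟨F, hF z (Metric.mem_ball_self hR), ?_⟩
  filter_upwards [Metric.ball_mem_nhds z hR] with x hx
  exact (hE hx).symm

open Classical in
noncomputable def ww (u : ℂ → ℝ) (D : Set ℂ) (ε : ℝ) (p : ℂ) : ℝ :=
  if p ∈ D then fe ε (u (Complex.exp p)) else 0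

theorem ww_loc {u : ℂ → ℝ} {b ε r₀ : ℝ} (hε : 0 < ε) (hr₀ : 0 < r₀) {ψp ψm : ℝ → ℝ} (hp : Continuous ψp) (hm : Continuous ψm)
    (hl : ∀ t, ψm t - ψp t ≤ 2 * Real.pi) {Ω : Set ℂ}
    (hΩ : Complex.exp '' (DD b ψp ψm) = Ω) (hu : HarmonicOnSet u Ω)
    (hub : ∀ z ∈ Ω, u z ≤ 1)
    (hbd : ∀ ζ ∈ frontier Ω, r₀ < ‖ζ‖ → Filter.limsup u (nhdsWithin ζ Ω) ≤ 0)
    (p : ℂ) (hpr : Real.log r₀ < p.re) : IsLoc (fe ε) (ww u (DD b ψp ψm) ε) p := by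
  have hD := DD_open (b := b) hp hm
  have hO : IsOpen Ω := by rw [← hΩ]; exact Complex.isOpenMap_exp _ hD
  by_cases hpD : p ∈ DD b ψp ψm
  · have hz : Complex.exp p ∈ Ω := by rw [← hΩ]; exact ⟨p, hpD, rfl⟩
    obtain ⟨F, hF, hE⟩ := loc_in hO hu hz
    refine ⟨fun q => F (Complex.exp q), AnalyticAt.fun_comp hF analyticAt_cexp, ?_⟩
    have := Complex.continuous_exp.continuousAt.eventually hE
    filter_upwards [this, hD.mem_nhds hpD] with q hq hqD
    rw [ww, if_pos hqD, hq]
  · have key : ww u (DD b ψp ψm) ε =ᶠ[𝓝 p] fun _ => 0 := by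
      by_cases hcl : p ∈ closure (DD b ψp ψm)
      · obtain ⟨c1, c2, c3⟩ := DD_closure hp hm hcl
        have hfr : Complex.exp p ∈ frontier Ω := by
          rw [hO.frontier_eq]
          constructor
          · rw [← hΩ]; exact image_closure_subset_closure_image Complex.continuous_exp ⟨p, hcl, rfl⟩
          · rw [← hΩ]
            rintro ⟨q, hq, hqe⟩
            obtain ⟨n, hn⟩ := Complex.exp_eq_exp_iff_exists_int.1 hqe
            have hre : q.re = p.re := by rw [hn]; simp
            have him : q.im = p.im + n * (2 * Real.pi) := by rw [hn]; simp
            have h2 := hq.2.1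
            have h3 := hq.2.2
            rw [hre] at h2 h3
            have hll := hl p.re
            have hpi := Real.pi_pos
            have n1 : (n:ℝ) < 1 := by
              by_contra hh
              push Not at hh
              nlinarith
            have n2 : (-1:ℝ) < n := by
              by_contra hh
              push Not at hh
              nlinarith
            have n0 : n = 0 := by
              have a1 : n < 1 := by exact_mod_cast n1
              have a2 : -1 < n := by exact_mod_cast n2
              omega
            rw [n0] at hn
            simp at hn
            exact hpD (hn ▸ hq)
        have hno : r₀ < ‖Complex.exp p‖ := by
          rw [Complex.norm_exp]; exact (Real.log_lt_iff_lt_exp hr₀).1 hpr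
        have hlim := lt_of_le_of_lt (hbd _ hfr hno) hε
        rw [Filter.limsup_eq] at hlim
        obtain ⟨a, ha, haε⟩ := exists_lt_of_csInf_lt ⟨1, by
          filter_upwards [self_mem_nhdsWithin] with z hz using hub z hz⟩ hlim
        have ha' := eventually_nhdsWithin_iff.1 ha
        have := Complex.continuous_exp.continuousAt.eventually ha'
        filter_upwards [this] with q hq
        rw [ww]
        split_ifs with h
        · exact fe_zero hε ((hq (by rw [← hΩ]; exact ⟨q, h, rfl⟩)).trans haε.le)
        · rfl
      · filter_upwards [isClosed_closure.isOpen_compl.mem_nhds hcl] with q hq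
        rw [ww, if_neg (fun h => hq (subset_closure h))]
    refine ⟨fun _ => 0, analyticAt_const, ?_⟩
    filter_upwards [key] with q hq
    rw [hq, Complex.zero_re, fe_zero hε hε.le]

theorem QQ_eq {α γ C r z : ℝ} (hr : 0 < r) (hz : 0 < z) (hC : 0 < C) :
    QQ α γ C (Real.log r) (Real.log z) = (r / z) ^ (1 / α) * (1 + C * z ^ γ) ^ (1 / (α * γ)) := by
  have e1 : Real.exp (γ * Real.log z) = z ^ γ := by rw [Real.rpow_def_of_pos hz, mul_comm]
  have hp : 0 < 1 + C * z ^ γ := by have := Real.rpow_pos_of_pos hz γ; positivity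
  rw [QQ, e1, Real.rpow_def_of_pos (div_pos hr hz), Real.rpow_def_of_pos hp, ← Real.exp_add,
    Real.log_div hr.ne' hz.ne']
  congr 1
  ring

theorem QQ_cont {α γ C t : ℝ} : Continuous fun t1 => QQ α γ C t1 t := by
  unfold QQ
  fun_prop

theorem stmt_6 (ρ₀ r₀ α γ C₁ : ℝ) (hρ₀ : 0 < ρ₀) (hr₀ : 0 < r₀) (hr : r₀ < ρ₀)
    (hα0 : 0 < α) (hα2 : α ≤ 2) (hγ0 : 0 < γ) (hγ1 : γ ≤ 1) (hC₁ : 0 < C₁)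
    (φp φm : ℝ → ℝ)
    (hφpc : ContinuousOn φp (Icc 0 ρ₀)) (hφmc : ContinuousOn φm (Icc 0 ρ₀))
    (hΘpos : ∀ r ∈ Ioc (0:ℝ) ρ₀, 0 < φm r - φp r)
    (hΘle : ∀ r ∈ Ioc (0:ℝ) ρ₀, φm r - φp r ≤ 2 * Real.pi)
    (hΘα : ∀ r ∈ Ioc (0:ℝ) ρ₀, φm r - φp r ≤ Real.pi * α * (1 + C₁ * r ^ γ))
    (u : ℂ → ℝ) (hu : HarmonicOnSet u (polarDomain ρ₀ φp φm))
    (hub : ∀ z ∈ polarDomain ρ₀ φp φm, u z ≤ 1)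
    (hbd : ∀ ζ ∈ frontier (polarDomain ρ₀ φp φm), r₀ < ‖ζ‖ →
      Filter.limsup u (nhdsWithin ζ (polarDomain ρ₀ φp φm)) ≤ 0) :
    ∀ z ∈ polarDomain ρ₀ φp φm, r₀ < ‖z‖ →
      u z ≤ (8 / Real.pi) * (r₀ / ‖z‖) ^ (1 / α) * (1 + C₁ * ‖z‖ ^ γ) ^ (1 / (α * γ)) := by
  intro z hz hzr
  have hpi := Real.pi_pos
  have hmc : Continuous fun t : ℝ => min (Real.exp t) ρ₀ := Real.continuous_exp.min continuous_const
  have hmem : ∀ t : ℝ, min (Real.exp t) ρ₀ ∈ Ioc (0:ℝ) ρ₀ :=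
    fun t => ⟨lt_min (Real.exp_pos t) hρ₀, min_le_right _ _⟩
  have hmem' : ∀ t : ℝ, min (Real.exp t) ρ₀ ∈ Icc (0:ℝ) ρ₀ := fun t => Ioc_subset_Icc_self (hmem t)
  obtain ⟨ψp, hψp⟩ : ∃ ψp : ℝ → ℝ, ψp = fun t => φp (min (Real.exp t) ρ₀) := ⟨_, rfl⟩
  obtain ⟨ψm, hψm⟩ : ∃ ψm : ℝ → ℝ, ψm = fun t => φm (min (Real.exp t) ρ₀) := ⟨_, rfl⟩
  have hpc : Continuous ψp := by rw [hψp]; exact hφpc.comp_continuous hmc hmem'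
  have hmc' : Continuous ψm := by rw [hψm]; exact hφmc.comp_continuous hmc hmem'
  have hpos : ∀ t, 0 < ψm t - ψp t := fun t => by rw [hψp, hψm]; exact hΘpos _ (hmem t)
  have hl2 : ∀ t, ψm t - ψp t ≤ 2 * Real.pi := fun t => by rw [hψp, hψm]; exact hΘle _ (hmem t)
  have hlac : ∀ t, ψm t - ψp t ≤ Real.pi * ac α γ C₁ t := by
    intro t
    have h1 : ψm t - ψp t ≤ Real.pi * aa α γ C₁ t := by
      have h := hΘα _ (hmem t)
      have h2 : (min (Real.exp t) ρ₀) ^ γ ≤ Real.exp (γ * t) := by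
        refine (Real.rpow_le_rpow (hmem t).1.le (min_le_left _ _) hγ0.le).trans ?_
        rw [← Real.exp_mul, mul_comm]
      rw [hψp, hψm, aa]
      refine h.trans ?_
      rw [← mul_assoc]
      gcongr
    rw [ac]
    rcases min_choice (aa α γ C₁ t) 2 with h | h <;> rw [h]
    · exact h1
    · linarith [hl2 t]
  obtain ⟨Y1, hY1⟩ := isCompact_Icc.exists_bound_of_continuousOn hφpc
  obtain ⟨Y2, hY2⟩ := isCompact_Icc.exists_bound_of_continuousOn hφmc
  obtain ⟨Y, hY⟩ : ∃ Y, Y = max (max Y1 Y2) 0 := ⟨_, rfl⟩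
  have hYp : 0 ≤ Y := hY ▸ le_max_right _ _
  have hYa : ∀ t, -Y ≤ ψp t := by
    intro t
    have h := (abs_le.1 (hY1 _ (hmem' t))).1
    have : Y1 ≤ Y := hY ▸ (le_max_left _ _).trans (le_max_left _ _)
    rw [hψp]; linarith
  have hYb : ∀ t, ψm t ≤ Y := by
    intro t
    have h := (abs_le.1 (hY2 _ (hmem' t))).2
    have : Y2 ≤ Y := hY ▸ (le_max_right _ _).trans (le_max_left _ _)
    rw [hψm]; linarith
  have hmin : ∀ t < Real.log ρ₀, min (Real.exp t) ρ₀ = Real.exp t := fun t ht =>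
    min_eq_left ((Real.lt_log_iff_exp_lt hρ₀).1 ht).le
  have hΩ : Complex.exp '' (DD (Real.log ρ₀) ψp ψm) = polarDomain ρ₀ φp φm :=
    exp_DD hρ₀ rfl (fun t ht => by rw [hψp]; simp only [hmin t ht])
      (fun t ht => by rw [hψm]; simp only [hmin t ht])
  have hzin := hz
  rw [← hΩ] at hzin
  obtain ⟨p, hpD, hpz⟩ := hzin
  have hnz : 0 < ‖z‖ := hr₀.trans hzr
  have hpre : p.re = Real.log ‖z‖ := by rw [← hpz, Complex.norm_exp, Real.log_exp]
  have hlt : Real.log r₀ < p.re := by rw [hpre]; exact Real.log_lt_log hr₀ hzr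
  have main : ∀ ε > 0, ∀ t1, Real.log r₀ < t1 → t1 ≤ p.re →
      u z - 2 * ε ≤ 8 / Real.pi * QQ α γ C₁ t1 p.re := by
    intro ε hε t1 h1 h2
    have hzero : ∀ q : ℂ, q ∉ DD (Real.log ρ₀) ψp ψm → ww u (DD (Real.log ρ₀) ψp ψm) ε q = 0 :=
      fun q hq => by rw [ww, if_neg hq]
    have := main_w (w := ww u (DD (Real.log ρ₀) ψp ψm) ε) hα0 hγ0 hγ1 hC₁ (fe_contDiff ε) (fe_convex hε)
      (t0 := Real.log r₀)
      (fun q hq => ww_loc hε hr₀ hpc hmc' hl2 hΩ hu hub hbd q hq)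
      (fun q => by
        rw [ww]; split_ifs
        · exact fe_nonneg hε _
        · exact le_rfl)
      (fun q => by
        rw [ww]; split_ifs with h
        · exact fe_le_one hε (hub _ (by rw [← hΩ]; exact ⟨q, h, rfl⟩))
        · exact zero_le_one) hYp
      (fun q hq => hzero q fun h => hq ⟨by linarith [hYa q.re, h.2.1], by linarith [hYb q.re, h.2.2]⟩)
      (T0 := Real.log ρ₀) (fun q hq => hzero q fun h => absurd h.1 (not_lt.2 hq))
      (fun t => ⟨ψp t, ψm t, by linarith [hpos t], hlac t, hYa t, hYb t, fun y hy => hzero _ fun h => hy (by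
        have ha := h.2.1
        have hb := h.2.2
        simp at ha hb
        exact ⟨ha, hb⟩)⟩) h1 h2 (y0 := p.im)
    rw [Complex.re_add_im, ww, if_pos hpD, hpz] at this
    linarith [fe_lower hε (u z)]
  have main2 : ∀ t1, Real.log r₀ < t1 → t1 ≤ p.re → u z ≤ 8 / Real.pi * QQ α γ C₁ t1 p.re := by
    intro t1 h1 h2
    refine le_of_forall_pos_le_add fun δ hδ => ?_
    have := main (δ / 2) (by positivity) t1 h1 h2
    linarith
  have lim : Tendsto (fun t1 => 8 / Real.pi * QQ α γ C₁ t1 p.re) (𝓝[>] (Real.log r₀))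
      (𝓝 (8 / Real.pi * QQ α γ C₁ (Real.log r₀) p.re)) :=
    ((QQ_cont.const_mul _).tendsto _).mono_left nhdsWithin_le_nhds |>.congr fun _ => rfl
  have fin : u z ≤ 8 / Real.pi * QQ α γ C₁ (Real.log r₀) p.re := by
    refine ge_of_tendsto lim ?_
    filter_upwards [Ioc_mem_nhdsGT hlt] with t1 ht1 using main2 t1 ht1.1 ht1.2
  rw [hpre, QQ_eq hr₀ hnz hC₁, ← mul_assoc] at fin
  exact fin
end

section
/- Let 0 < α ≤ 2, b > 0 with 2b < 1/α, and a > 0. For 0 < R < a^α define F(R) := 2 ∫_0^R (4 a^{2αb}/(απ r)) ∑_{j=0}^∞ [ (r/a^α)^{2b} − (r/a^α)^{(2j+1)/α} ] / ( ((2j+1)/α)² − (2b)² ) dr. Then the series converges for every r ∈ (0, a^α), the integral is finite, and there exist constants C > 0 and R̄ ∈ (0, a^α) such that |F(R) − (tan(παb)/(2b²)) R^{2b}| ≤ C R^{1/α} for all R ∈ (0, R̄). In particular, for every ε > 0 there exists R̄' > 0 such that F(R) ≥ (1 − ε)(tan(παb)/(2b²)) R^{2b} for all R ∈ (0, R̄').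 -/
open Set

lemma my_congr {E : Type*} [AddCommMonoid E] [TopologicalSpace E] {f g : ℕ → E} {s : E}
    (h : ∀ n, f n = g n) (hg : HasSum g s) : HasSum f s := by
  rwa [show f = g from funext h]

set_option maxHeartbeats 2000000 in
lemma tan_series (x : ℝ) (h0 : 0 < x) (h1 : x < 1) :
    HasSum (fun j : ℕ => 1 / ((2 * (j:ℝ) + 1) ^ 2 - x ^ 2))
      (Real.pi * Real.tan (Real.pi * x / 2) / (4 * x)) := by
  have key : ∀ z : ℝ, 0 < z → z < 1 →
      HasSum (fun n : ℕ => 1 / (z - ((n:ℝ) + 1)) + 1 / (z + ((n:ℝ) + 1)))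
        (Real.pi * Real.cot (Real.pi * z) - 1 / z) := by
    intro z hz0 hz1
    have hz : (z : ℂ) ∈ Complex.integerComplement := by
      rw [Complex.mem_integerComplement_iff]
      rintro ⟨n, hn⟩
      have hn' : (n : ℝ) = z := by exact_mod_cast hn
      rw [← hn'] at hz0 hz1
      have a1 : 0 < n := by exact_mod_cast hz0
      have a2 : n < 1 := by exact_mod_cast hz1
      omega
    have h := (summable_cotTerm hz).hasSum
    rw [← cot_series_rep' hz] at h
    rw [← Complex.hasSum_ofReal]
    have e : ((Real.pi * Real.cot (Real.pi * z) - 1 / z : ℝ) : ℂ)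
        = Real.pi * Complex.cot (Real.pi * z) - 1 / z := by simp
    rw [e]
    refine my_congr (fun n => ?_) h
    simp [cotTerm]
  have k1 := key x h0 h1
  have k2 := key (x / 2) (by linarith) (by linarith)
  have hs : Summable (fun j : ℕ => 1 / ((2 * (j:ℝ) + 1) ^ 2 - x ^ 2)) := by
    have := k1.summable.comp_injective (i := fun k : ℕ => 2 * k)
      (fun a b h => by simpa using h)
    refine (this.mul_left (-1 / (2 * x))).congr ?_
    intro j
    have hj : (0:ℝ) ≤ j := Nat.cast_nonneg j
    have e1 : x - (2 * (j:ℝ) + 1) ≠ 0 := by linarith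
    have e2 : x + (2 * (j:ℝ) + 1) ≠ 0 := by positivity
    have e3 : (2 * (j:ℝ) + 1) ^ 2 - x ^ 2 ≠ 0 := by nlinarith
    simp only [Function.comp]
    push_cast
    field_simp
    ring
  obtain ⟨s, hs⟩ := hs
  have ho : HasSum (fun k : ℕ => (fun n : ℕ => 1 / (x - ((n:ℝ) + 1)) + 1 / (x + ((n:ℝ) + 1))) (2 * k))
      ((-2 * x) * s) := by
    refine my_congr (fun j => ?_) (hs.mul_left (-2 * x))
    have hj : (0:ℝ) ≤ j := Nat.cast_nonneg j
    have e1 : x - (2 * (j:ℝ) + 1) ≠ 0 := by linarith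
    have e2 : x + (2 * (j:ℝ) + 1) ≠ 0 := by positivity
    have e3 : (2 * (j:ℝ) + 1) ^ 2 - x ^ 2 ≠ 0 := by nlinarith
    push_cast
    field_simp
    ring
  have he : HasSum (fun k : ℕ => (fun n : ℕ => 1 / (x - ((n:ℝ) + 1)) + 1 / (x + ((n:ℝ) + 1))) (2 * k + 1))
      ((1 / 2) * (Real.pi * Real.cot (Real.pi * (x / 2)) - 1 / (x / 2))) := by
    refine my_congr (fun j => ?_) (k2.mul_left (1 / 2))
    have hj : (0:ℝ) ≤ j := Nat.cast_nonneg j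
    have e1 : x - (2 * (j:ℝ) + 1 + 1) ≠ 0 := by linarith
    have e2 : x + (2 * (j:ℝ) + 1 + 1) ≠ 0 := by positivity
    have e3 : x / 2 - ((j:ℝ) + 1) = (x - (2 * (j:ℝ) + 1 + 1)) / 2 := by ring
    have e4 : x / 2 + ((j:ℝ) + 1) = (x + (2 * (j:ℝ) + 1 + 1)) / 2 := by ring
    rw [e3, e4]
    push_cast
    field_simp
  have hu : (-2 * x) * s + (1 / 2) * (Real.pi * Real.cot (Real.pi * (x / 2)) - 1 / (x / 2))
      = Real.pi * Real.cot (Real.pi * x) - 1 / x := (HasSum.even_add_odd ho he).unique k1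
  have : s = Real.pi * Real.tan (Real.pi * x / 2) / (4 * x) := by
    have hpi := Real.pi_pos
    have hy0 : 0 < Real.pi * x / 2 := by positivity
    have hy1 : Real.pi * x / 2 < Real.pi / 2 := by nlinarith
    have hsin : Real.sin (Real.pi * x / 2) ≠ 0 :=
      (Real.sin_pos_of_pos_of_lt_pi hy0 (by linarith)).ne'
    have hcos : Real.cos (Real.pi * x / 2) ≠ 0 :=
      (Real.cos_pos_of_mem_Ioo ⟨by linarith, hy1⟩).ne'
    have ht : Real.tan (Real.pi * x / 2) = Real.cot (Real.pi * (x / 2)) - 2 * Real.cot (Real.pi * x) := by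
      have e1 : Real.pi * (x / 2) = Real.pi * x / 2 := by ring
      have e2 : Real.pi * x = 2 * (Real.pi * x / 2) := by ring
      rw [e1]
      conv_rhs => rw [e2]
      rw [show 2 * (Real.pi * x / 2) / 2 = Real.pi * x / 2 by ring]
      rw [Real.cot_eq_cos_div_sin, Real.cot_eq_cos_div_sin, Real.tan_eq_sin_div_cos,
        Real.sin_two_mul, Real.cos_two_mul']
      field_simp
      ring
    rw [ht]
    rw [eq_div_iff (by positivity)]
    have e5 : 1 / (x / 2) = 2 * (1 / x) := by field_simp
    rw [e5] at hu
    linarith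
  rw [← this]
  exact hs

/-- for `0 < α ≤ 2`, `b > 0` with `2b < 1/α`, and `a > 0`, the explicit
balayage mass `F(R)` of the sector satisfies: the series converges for `r ∈ (0, a^α)`,
the integral is finite, `|F(R) − (tan(παb)/(2b²)) R^{2b}| ≤ C R^{1/α}` for small `R`,
and for every `ε > 0`, `F(R) ≥ (1−ε)(tan(παb)/(2b²)) R^{2b}` for all small `R`. -/
theorem stmt_10 (α b a : ℝ) (hα0 : 0 < α) (hα2 : α ≤ 2) (hb : 0 < b) (h2b : 2 * b < 1 / α)
    (ha : 0 < a) (F : ℝ → ℝ)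
    (hF : ∀ R : ℝ, F R = 2 * ∫ r in (0:ℝ)..R,
      (4 * a ^ (2 * α * b) / (α * Real.pi * r)) *
        ∑' j : ℕ, ((r / a ^ α) ^ (2 * b) - (r / a ^ α) ^ ((2 * (j:ℝ) + 1) / α)) /
          (((2 * (j:ℝ) + 1) / α) ^ 2 - (2 * b) ^ 2)) :
    (∀ r ∈ Ioo (0:ℝ) (a ^ α),
      Summable (fun j : ℕ =>
        ((r / a ^ α) ^ (2 * b) - (r / a ^ α) ^ ((2 * (j:ℝ) + 1) / α)) /
          (((2 * (j:ℝ) + 1) / α) ^ 2 - (2 * b) ^ 2))) ∧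
    (∀ R ∈ Ioo (0:ℝ) (a ^ α),
      IntervalIntegrable (fun r : ℝ =>
        (4 * a ^ (2 * α * b) / (α * Real.pi * r)) *
          ∑' j : ℕ, ((r / a ^ α) ^ (2 * b) - (r / a ^ α) ^ ((2 * (j:ℝ) + 1) / α)) /
            (((2 * (j:ℝ) + 1) / α) ^ 2 - (2 * b) ^ 2))
        MeasureTheory.volume 0 R) ∧
    (∃ C > (0:ℝ), ∃ Rb ∈ Ioo (0:ℝ) (a ^ α), ∀ R ∈ Ioo (0:ℝ) Rb,
      |F R - Real.tan (Real.pi * α * b) / (2 * b ^ 2) * R ^ (2 * b)| ≤ C * R ^ (1 / α)) ∧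
    (∀ ε > (0:ℝ), ∃ Rb' > (0:ℝ), ∀ R ∈ Ioo (0:ℝ) Rb',
      F R ≥ (1 - ε) * (Real.tan (Real.pi * α * b) / (2 * b ^ 2)) * R ^ (2 * b)) := by
  have hA : 0 < a ^ α := Real.rpow_pos_of_pos ha α
  have hab : a ^ (2 * α * b) = (a ^ α) ^ (2 * b) := by
    rw [← Real.rpow_mul ha.le]; ring_nf
  simp only [hab] at hF ⊢
  clear hab
  generalize a ^ α = A at *
  have hpi := Real.pi_pos
  have hx1 : 2 * α * b < 1 := by
    rw [lt_div_iff₀ hα0] at h2b; linarith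
  have hx0 : 0 < 2 * α * b := by positivity
  set T := Real.tan (Real.pi * α * b) with hT
  have hTpos : 0 < T := by
    apply Real.tan_pos_of_pos_of_lt_pi_div_two
    · positivity
    · nlinarith
  set c : ℕ → ℝ := fun j => 1 / (((2 * (j:ℝ) + 1) / α) ^ 2 - (2 * b) ^ 2) with hc
  set S := α * Real.pi * T / (8 * b) with hS
  have hcS : HasSum c S := by
    have h := (tan_series (2 * α * b) hx0 hx1).mul_left (α ^ 2)
    have e : S = α ^ 2 * (Real.pi * Real.tan (Real.pi * (2 * α * b) / 2) / (4 * (2 * α * b))) := by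
      rw [hS, hT, show Real.pi * (2 * α * b) / 2 = Real.pi * α * b by ring]
      field_simp
      ring
    rw [e]
    refine my_congr (fun j => ?_) h
    simp only [hc]
    have : ((2 * (j:ℝ) + 1) / α) ^ 2 - (2 * b) ^ 2
      = ((2 * (j:ℝ) + 1) ^ 2 - (2 * α * b) ^ 2) / α ^ 2 := by field_simp
    rw [this, one_div_div]; ring
  have hlam : ∀ j : ℕ, 1 / α ≤ (2 * (j:ℝ) + 1) / α := by
    intro j
    have hj : (0:ℝ) ≤ j := Nat.cast_nonneg j
    gcongr; linarith
  have hα1 : 0 < 1 / α := by positivity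
  have hcpos : ∀ j, 0 ≤ c j := by
    intro j
    have h := hlam j
    have : 0 < ((2 * (j:ℝ) + 1) / α) ^ 2 - (2 * b) ^ 2 := by nlinarith
    simp only [hc]; positivity
  have hSpos : 0 < S := by positivity
  have hbd : ∀ r ∈ Icc (0:ℝ) A, ∀ j : ℕ,
      (r / A) ^ ((2 * (j:ℝ) + 1) / α) * c j ≤ (r / A) ^ (1 / α) * c j := by
    intro r hr j
    apply mul_le_mul_of_nonneg_right _ (hcpos j)
    have h0 : 0 ≤ r / A := div_nonneg hr.1 hA.le
    have h1 : r / A ≤ 1 := (div_le_one hA).2 hr.2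
    exact Real.rpow_le_rpow_of_exponent_ge_of_imp h0 h1 (hlam j) (fun _ h => by linarith [hlam j])
  have hnn : ∀ r ∈ Icc (0:ℝ) A, ∀ j : ℕ, 0 ≤ (r / A) ^ ((2 * (j:ℝ) + 1) / α) * c j := by
    intro r hr j
    exact mul_nonneg (Real.rpow_nonneg (div_nonneg hr.1 hA.le) _) (hcpos j)
  set G : ℝ → ℝ := fun r => ∑' j : ℕ, (r / A) ^ ((2 * (j:ℝ) + 1) / α) * c j with hG
  have hGs : ∀ r ∈ Icc (0:ℝ) A, Summable (fun j : ℕ => (r / A) ^ ((2 * (j:ℝ) + 1) / α) * c j) :=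
    fun r hr => Summable.of_nonneg_of_le (hnn r hr) (hbd r hr) (hcS.summable.mul_left _)
  have hGnn : ∀ r ∈ Icc (0:ℝ) A, 0 ≤ G r := fun r hr => tsum_nonneg (hnn r hr)
  have hGle : ∀ r ∈ Icc (0:ℝ) A, G r ≤ (r / A) ^ (1 / α) * S := by
    intro r hr
    rw [← hcS.tsum_eq, ← tsum_mul_left]
    exact (hGs r hr).tsum_le_tsum (hbd r hr) (hcS.summable.mul_left _)
  have hGc : ContinuousOn G (Icc 0 A) := by
    apply continuousOn_tsum (u := c) _ hcS.summable
    · intro j r hr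
      rw [Real.norm_of_nonneg (hnn r hr j)]
      have h0 : 0 ≤ r / A := div_nonneg hr.1 hA.le
      have h1 : r / A ≤ 1 := (div_le_one hA).2 hr.2
      have := Real.rpow_le_one h0 h1 (hα1.le.trans (hlam j))
      exact mul_le_of_le_one_left (hcpos j) this
    · intro j
      have := hα1.le.trans (hlam j)
      exact ((continuous_id.div_const A).rpow_const (fun _ => Or.inr this)).continuousOn.mul
        continuousOn_const
  have hterm : ∀ (r : ℝ) (j : ℕ), ((r / A) ^ (2 * b) - (r / A) ^ ((2 * (j:ℝ) + 1) / α)) /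
          (((2 * (j:ℝ) + 1) / α) ^ 2 - (2 * b) ^ 2)
      = (r / A) ^ (2 * b) * c j - (r / A) ^ ((2 * (j:ℝ) + 1) / α) * c j := by
    intro r j; simp only [hc]; ring
  simp only [hterm] at hF ⊢
  have hsum : ∀ r ∈ Icc (0:ℝ) A, HasSum (fun j : ℕ =>
      (r / A) ^ (2 * b) * c j - (r / A) ^ ((2 * (j:ℝ) + 1) / α) * c j)
      ((r / A) ^ (2 * b) * S - G r) := by
    intro r hr
    exact (hcS.mul_left _).sub (hGs r hr).hasSum
  set K := 4 * A ^ (2 * b) / (α * Real.pi) with hK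
  have hKpos : 0 < K := by positivity
  have hint : ∀ r ∈ Ioc (0:ℝ) A, (4 * A ^ (2 * b) / (α * Real.pi * r)) *
      ∑' j : ℕ, ((r / A) ^ (2 * b) * c j - (r / A) ^ ((2 * (j:ℝ) + 1) / α) * c j)
      = T / (2 * b) * r ^ (2 * b - 1) - K / r * G r := by
    intro r hr
    have hr0 := hr.1
    rw [(hsum r ⟨hr.1.le, hr.2⟩).tsum_eq, Real.div_rpow hr.1.le hA.le, Real.rpow_sub_one hr.1.ne']
    have : 0 < A ^ (2 * b) := Real.rpow_pos_of_pos hA _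
    rw [hK, hS]
    field_simp
    ring
  set D := K * S / A ^ (1 / α) with hD
  have hDpos : 0 < D := by positivity
  have hrem : ∀ r ∈ Ioc (0:ℝ) A, ‖K / r * G r‖ ≤ D * r ^ (1 / α - 1) := by
    intro r hr
    have hr0 := hr.1
    have hr' : r ∈ Icc 0 A := ⟨hr.1.le, hr.2⟩
    rw [Real.norm_of_nonneg (mul_nonneg (by positivity) (hGnn r hr'))]
    calc K / r * G r ≤ K / r * ((r / A) ^ (1 / α) * S) := by
          gcongr; exact hGle r hr'
      _ = _ := by
          rw [Real.div_rpow hr.1.le hA.le, Real.rpow_sub_one hr.1.ne', hD]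
          field_simp
  have hi1 : ∀ R, IntervalIntegrable (fun r : ℝ => T / (2 * b) * r ^ (2 * b - 1))
      MeasureTheory.volume 0 R := fun R =>
    (intervalIntegral.intervalIntegrable_rpow' (by linarith)).const_mul _
  have hi3 : ∀ R, IntervalIntegrable (fun r : ℝ => D * r ^ (1 / α - 1))
      MeasureTheory.volume 0 R := fun R =>
    (intervalIntegral.intervalIntegrable_rpow' (by linarith)).const_mul _
  have hi2 : ∀ R ∈ Ioo (0:ℝ) A, IntervalIntegrable (fun r : ℝ => K / r * G r)
      MeasureTheory.volume 0 R := by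
    intro R hR
    refine (hi3 R).mono_fun' ?_ ?_
    · rw [uIoc_of_le hR.1.le]
      apply ContinuousOn.aestronglyMeasurable _ measurableSet_Ioc
      apply ContinuousOn.mul
      · exact continuousOn_const.div continuousOn_id (fun r hr => hr.1.ne')
      · exact hGc.mono (fun r hr => ⟨hr.1.le, hr.2.trans hR.2.le⟩)
    · rw [uIoc_of_le hR.1.le]
      filter_upwards [MeasureTheory.ae_restrict_mem measurableSet_Ioc] with r hr
      exact hrem r ⟨hr.1, hr.2.trans hR.2.le⟩
  have hFR : ∀ R ∈ Ioo (0:ℝ) A,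
      |F R - T / (2 * b ^ 2) * R ^ (2 * b)| ≤ (2 * D * α) * R ^ (1 / α) := by
    intro R hR
    have e1 : F R = 2 * ∫ r in (0:ℝ)..R, (T / (2 * b) * r ^ (2 * b - 1) - K / r * G r) := by
      rw [hF]
      congr 1
      apply intervalIntegral.integral_congr_ae
      refine Filter.Eventually.of_forall fun r hr => ?_
      rw [uIoc_of_le hR.1.le] at hr
      exact hint r ⟨hr.1, hr.2.trans hR.2.le⟩
    rw [intervalIntegral.integral_sub (hi1 R) (hi2 R hR), intervalIntegral.integral_const_mul,
      integral_rpow (Or.inl (by linarith))] at e1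
    have e2 : ‖∫ r in (0:ℝ)..R, K / r * G r‖ ≤ ∫ r in (0:ℝ)..R, D * r ^ (1 / α - 1) := by
      apply intervalIntegral.norm_integral_le_of_norm_le hR.1.le _ (hi3 R)
      refine Filter.Eventually.of_forall fun r hr => ?_
      exact hrem r ⟨hr.1, hr.2.trans hR.2.le⟩
    rw [intervalIntegral.integral_const_mul, integral_rpow (Or.inl (by linarith)),
      sub_add_cancel, Real.zero_rpow hα1.ne', sub_zero, Real.norm_eq_abs] at e2
    rw [sub_add_cancel, Real.zero_rpow (by positivity), sub_zero] at e1
    have e3 : F R - T / (2 * b ^ 2) * R ^ (2 * b) = -2 * ∫ r in (0:ℝ)..R, K / r * G r := by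
      rw [e1]; field_simp; ring
    rw [e3, abs_mul, show |(-2:ℝ)| = 2 by norm_num]
    calc _ ≤ 2 * (D * (R ^ (1 / α) / (1 / α))) := by gcongr
      _ = _ := by field_simp
  refine ⟨fun r hr => (hsum r ⟨hr.1.le, hr.2.le⟩).summable, ?_, ?_, ?_⟩
  · intro R hR
    refine ((hi1 R).sub (hi2 R hR)).congr ?_
    intro r hr
    rw [uIoc_of_le hR.1.le] at hr
    exact (hint r ⟨hr.1, hr.2.trans hR.2.le⟩).symm
  · exact ⟨2 * D * α, by positivity, A / 2, ⟨by positivity, by linarith⟩,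
      fun R hR => hFR R ⟨hR.1, by linarith [hR.2]⟩⟩
  · intro ε hε
    set p := 1 / α - 2 * b with hp
    have hp0 : 0 < p := by linarith
    set M := ε * (T / (2 * b ^ 2)) / (2 * D * α) with hM
    have hM0 : 0 < M := by positivity
    refine ⟨min A (M ^ (1 / p)), by positivity, ?_⟩
    intro R hR
    have hRA : R < A := hR.2.trans_le (min_le_left _ _)
    have hRM : R < M ^ (1 / p) := hR.2.trans_le (min_le_right _ _)
    have h1 := (abs_le.1 (hFR R ⟨hR.1, hRA⟩)).1
    have h2 : R ^ p ≤ M := by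
      have := Real.rpow_le_rpow hR.1.le hRM.le hp0.le
      rwa [← Real.rpow_mul hM0.le, one_div_mul_cancel hp0.ne', Real.rpow_one] at this
    have h3 : R ^ (1 / α) = R ^ p * R ^ (2 * b) := by
      rw [← Real.rpow_add hR.1, hp]; ring_nf
    have h4 : 0 < R ^ (2 * b) := Real.rpow_pos_of_pos hR.1 _
    have h5 : (2 * D * α) * R ^ (1 / α) ≤ ε * (T / (2 * b ^ 2)) * R ^ (2 * b) := by
      rw [h3, ← mul_assoc]
      apply mul_le_mul_of_nonneg_right _ h4.le
      calc (2 * D * α) * R ^ p ≤ (2 * D * α) * M := by gcongr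
        _ = _ := by rw [hM]; field_simp
    linarith
end
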